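/- arXiv:1707.00853 — 2 statements merged into one kernel-verified Lean document; each statement's English description precedes it below -/
import Mathlib

section
/- Let X ⊂ P^4 be a smooth cubic threefold and x ∈ X a point that is not an Eckardt point (i.e. only finitely many lines of X pass through x). Then the lines contained in X passing through x correspond exactly to the intersection points of a plane conic and a plane cubic curve without common components; in particular there are six such lines counted with multiplicity. -/
open Module MvPolynomial

noncomputable section

/-- The point `x = [1,0,0,0,0] ∈ ℙ⁴`. -/
def e₀ : Fin 5 → ℂ := fun i => if i = 0 then 1 else 0

/-- The cubic `F = x₀²x₄ + x₀·Q(x₁,…,x₄) + C(x₁,…,x₄)`, the normal form of a cubic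
threefold through `x = [1,0,0,0,0]` with tangent hyperplane `x₄ = 0` there. -/
def cubicF (Q C : MvPolynomial (Fin 4) ℂ) : MvPolynomial (Fin 5) ℂ :=
  X 0 ^ 2 * X 4 + X 0 * rename Fin.succ Q + rename Fin.succ C

/-- Restriction of a polynomial in `x₁,…,x₄` to the plane `x₄ = 0`. -/
def restrict0 (P : MvPolynomial (Fin 4) ℂ) : MvPolynomial (Fin 3) ℂ :=
  aeval (Fin.snoc (fun i : Fin 3 => (X i : MvPolynomial (Fin 3) ℂ)) 0) P

/-- The lines of `X = V(F)` through the point `x = [1,0,0,0,0]`, as 2-dimensional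
subspaces of `ℂ⁵`. -/
def LinesThrough (F : MvPolynomial (Fin 5) ℂ) : Set (Submodule ℂ (Fin 5 → ℂ)) :=
  {W | finrank ℂ W = 2 ∧ e₀ ∈ W ∧ ∀ v ∈ W, eval v F = 0}

/-- The common zeros in `ℙ²` of the restricted conic `Q(x₁,x₂,x₃,0)` and cubic
`C(x₁,x₂,x₃,0)`, as 1-dimensional subspaces of `ℂ³`. -/
def ConicCubicPts (Q C : MvPolynomial (Fin 4) ℂ) : Set (Submodule ℂ (Fin 3 → ℂ)) :=
  {D | finrank ℂ D = 1 ∧ ∀ a ∈ D, eval a (restrict0 Q) = 0 ∧ eval a (restrict0 C) = 0}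

/-!
Write `q` and `c` for the restrictions of `Q` and `C` to the plane `x₀ = x₄ = 0`. On the line
through `x` with direction `a`, the cubic `F` is polynomial in the parameter along `x`; its
vanishing forces `a₄ = 0` and then `t * q(a) + c(a) = 0` for all `t`, that is, `q(a) = c(a) = 0`.

If `d` divides `q` and `c`, so does the leading form of `d`. A form of positive degree in three
variables over an algebraically closed field has infinitely many zeros in `ℙ²`: finitely many could
be avoided by a line, but the form has a zero on every line. So finiteness makes `q` and `c`
coprime.

For coprime plane forms `f`, `g` of degrees `m`, `n`, write `S_d` for the space of forms of degree
`d`. The subspaces `f · S_(n+k)` and `g · S_(m+k)` of `S_(m+n+k)` meet in `f * g · S_k`, and their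
sum vanishes at all common zeros. For large `k`, any `N` points impose `N` independent conditions on
`S_(m+n+k)`, so `N` common zeros force
`N ≤ dim S_(m+n+k) - dim S_(n+k) - dim S_(m+k) + dim S_k = m * n`.
-/

open scoped LinearAlgebra.Projectivization

section Forms

variable {σ R : Type*} [CommSemiring R] {f p q : MvPolynomial σ R} {m n : ℕ}

theorem eval_smul_of_isHomogeneous (hf : f.IsHomogeneous n) (k : R) (v : σ → R) :
    eval (k • v) f = k ^ n * eval v f := by
  rw [eval_eq, eval_eq, Finset.mul_sum]
  refine Finset.sum_congr rfl fun d hd => ?_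
  simp only [Pi.smul_apply, smul_eq_mul, mul_pow, Finset.prod_mul_distrib,
    Finset.prod_pow_eq_pow_sum, ← hf.degree_eq_sum_deg_support hd]
  ring

theorem eval_aeval {τ : Type*} (v : τ → R) (g : σ → MvPolynomial τ R) (f : MvPolynomial σ R) :
    eval v (aeval g f) = eval (fun i => eval v (g i)) f :=
  comp_aeval_apply _ (aeval v) f

theorem homogeneousComponent_add_mul
    (h : ∀ i ∈ p.support, ∀ j ∈ q.support, i.degree + j.degree = m + n → i.degree = m) :
    homogeneousComponent (m + n) (p * q) = homogeneousComponent m p * homogeneousComponent n q := by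
  classical
  ext d
  simp only [coeff_homogeneousComponent, coeff_mul, ite_zero_mul_ite_zero]
  rw [Finset.ite_sum_zero]
  refine Finset.sum_congr rfl fun x hx => ?_
  rw [← Finset.HasAntidiagonal.mem_antidiagonal.1 hx, map_add]
  by_cases h0 : coeff x.1 p * coeff x.2 q = 0
  · simp [h0]
  have hdeg := h x.1 (mem_support_iff.2 (left_ne_zero_of_mul h0)) x.2
    (mem_support_iff.2 (right_ne_zero_of_mul h0))
  exact if_congr ⟨fun hmn => ⟨hdeg hmn, by omega⟩, fun hmn => by omega⟩ rfl rfl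

theorem homogeneousComponent_add_mul_of_isHomogeneous (hf : f.IsHomogeneous m)
    (q : MvPolynomial σ R) (n : ℕ) :
    homogeneousComponent (m + n) (f * q) = f * homogeneousComponent n q := by
  rw [homogeneousComponent_add_mul, homogeneousComponent_eq_self hf]
  intro i hi j _ _
  rw [Finsupp.degree_eq_weight_one]
  exact hf (mem_support_iff.1 hi)

theorem homogeneousComponent_totalDegree_dvd [NoZeroDivisors R] (hf : f.IsHomogeneous n)
    (hpf : p ∣ f) : homogeneousComponent p.totalDegree p ∣ f := by
  obtain ⟨q, rfl⟩ := hpf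
  rcases eq_or_ne (p * q) 0 with h0 | h0
  · rw [h0]; exact dvd_zero _
  have hn : n = p.totalDegree + q.totalDegree := by
    rw [← hf.totalDegree h0, totalDegree_mul_of_isDomain (left_ne_zero_of_mul h0)
      (right_ne_zero_of_mul h0)]
  refine ⟨homogeneousComponent q.totalDegree q, ?_⟩
  rw [← homogeneousComponent_add_mul, ← hn, homogeneousComponent_eq_self hf]
  intro i hi j hj hij
  have hip : i.degree ≤ p.totalDegree := le_totalDegree hi
  have hjq : j.degree ≤ q.totalDegree := le_totalDegree hj
  omega

theorem ne_zero_of_isRelPrime_of_isHomogeneous [Nontrivial R] (h : IsRelPrime p f)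
    (hf : f.IsHomogeneous n) (hn : n ≠ 0) : p ≠ 0 := by
  rintro rfl
  have hunit := isRelPrime_zero_left.1 h
  have h0 : coeff 0 f = 0 := hf.coeff_eq_zero (by simpa using hn.symm)
  simpa [constantCoeff_eq, h0] using hunit.map constantCoeff

end Forms

theorem finrank_homogeneousSubmodule (σ R : Type*) [CommRing R] [Nontrivial R] (n : ℕ) :
    finrank R (homogeneousSubmodule σ R n) = (Nat.card σ).multichoose n := by
  classical
  let b : Basis {d : σ →₀ ℕ | d.degree = n} R (homogeneousSubmodule σ R n) :=
    .ofRepr <| (LinearEquiv.ofEq _ _ (homogeneousSubmodule_eq_finsupp_supported σ R n)).trans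
      (AddMonoidAlgebra.supportedEquivFinsupp _)
  rw [finrank_eq_nat_card_basis b, ← Sym.natCard_sym_eq_multichoose]
  exact Nat.card_congr (Sym.equivNatSum σ n).symm

theorem two_mul_multichoose_three (n : ℕ) : 2 * Nat.multichoose 3 n = (n + 1) * (n + 2) := by
  induction n with
  | zero => simp
  | succ n ih =>
    rw [Nat.multichoose_succ_succ, Nat.multichoose_two, mul_add, ih]
    ring

theorem finrank_map_add_finrank_inf_ker {K V W : Type*} [DivisionRing K]
    [AddCommGroup V] [Module K V] [AddCommGroup W] [Module K W] (φ : V →ₗ[K] W)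
    (S : Submodule K V) [FiniteDimensional K S] :
    finrank K (S.map φ) + finrank K (S ⊓ LinearMap.ker φ : Submodule K V) = finrank K S := by
  have h := (φ.domRestrict S).finrank_range_add_finrank_ker
  rwa [LinearMap.range_domRestrict, LinearMap.ker_domRestrict, ← Submodule.finrank_map_subtype_eq,
    Submodule.map_comap_subtype] at h

section Points

variable {σ K : Type*} [Field K]

/-- The zero locus of `f` in projective space, tested on the representatives `Projectivization.rep`;
for a form `f` the choice of representatives is immaterial, see `mk_mem_projectiveZeros`. -/
def projectiveZeros (f : MvPolynomial σ K) : Set (ℙ K (σ → K)) := {p | eval p.rep f = 0}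

theorem mem_projectiveZeros {f : MvPolynomial σ K} {p : ℙ K (σ → K)} :
    p ∈ projectiveZeros f ↔ eval p.rep f = 0 := Iff.rfl

theorem mk_mem_projectiveZeros {f : MvPolynomial σ K} {n : ℕ} (hf : f.IsHomogeneous n)
    {v : σ → K} (hv : v ≠ 0) : .mk K v hv ∈ projectiveZeros f ↔ eval v f = 0 := by
  obtain ⟨a, ha⟩ := Projectivization.exists_smul_eq_mk_rep K v hv
  rw [mem_projectiveZeros, ← ha, Units.smul_def, eval_smul_of_isHomogeneous hf,
    mul_eq_zero_iff_left (pow_ne_zero n a.ne_zero)]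

theorem projectiveZeros_subset_of_dvd {f g : MvPolynomial σ K} (h : f ∣ g) :
    projectiveZeros f ⊆ projectiveZeros g := by
  obtain ⟨k, rfl⟩ := h
  intro p hp
  rw [mem_projectiveZeros] at hp ⊢
  rw [map_mul, hp, zero_mul]

theorem image_submodule_inter_projectiveZeros {f g : MvPolynomial σ K} {m n : ℕ}
    (hf : f.IsHomogeneous m) (hg : g.IsHomogeneous n) :
    Projectivization.submodule '' (projectiveZeros f ∩ projectiveZeros g) =
      {D : Submodule K (σ → K) | finrank K D = 1 ∧ ∀ a ∈ D, eval a f = 0 ∧ eval a g = 0} := by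
  ext D
  constructor
  · rintro ⟨p, ⟨hpf, hpg⟩, rfl⟩
    refine ⟨p.finrank_submodule, fun a ha => ?_⟩
    rw [p.submodule_eq] at ha
    obtain ⟨k, rfl⟩ := Submodule.mem_span_singleton.1 ha
    rw [eval_smul_of_isHomogeneous hf, eval_smul_of_isHomogeneous hg,
      mem_projectiveZeros.1 hpf, mem_projectiveZeros.1 hpg, mul_zero, mul_zero]
    exact ⟨rfl, rfl⟩
  · rintro ⟨hD, hzero⟩
    obtain ⟨p, rfl⟩ : ∃ p : ℙ K (σ → K), p.submodule = D :=
      ⟨.mk'' D hD, Projectivization.submodule_mk'' D hD⟩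
    have hrep : p.rep ∈ p.submodule := by
      rw [p.submodule_eq]
      exact Submodule.mem_span_singleton_self _
    exact ⟨p, hzero _ hrep, rfl⟩

theorem exists_linearForm_separating {p q : ℙ K (σ → K)} (hpq : p ≠ q) :
    ∃ l : MvPolynomial σ K, l.IsHomogeneous 1 ∧ eval p.rep l ≠ 0 ∧ eval q.rep l = 0 := by
  obtain ⟨j, hj⟩ := Function.ne_iff.1 q.rep_nonzero
  rw [Pi.zero_apply] at hj
  obtain ⟨i, hi⟩ := Function.ne_iff.1 <| (LinearIndependent.pair_iff' q.rep_nonzero).1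
    (Projectivization.linearIndependent_pair_iff_ne.2 hpq.symm) (p.rep j / q.rep j)
  refine ⟨C (q.rep j) * X i - C (q.rep i) * X j,
    (isHomogeneous_C_mul_X _ _).sub (isHomogeneous_C_mul_X _ _), fun h => hi ?_, ?_⟩
  · simp only [map_sub, map_mul, eval_C, eval_X] at h
    rw [Pi.smul_apply, smul_eq_mul, div_mul_eq_mul_div, div_eq_iff hj]
    linear_combination -h
  · simp only [map_sub, map_mul, eval_C, eval_X]
    ring

theorem exists_form_separating {T : Finset (ℙ K (σ → K))} {p : ℙ K (σ → K)} (hp : p ∉ T)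
    {n : ℕ} (hT : T.card ≤ n) : ∃ f : MvPolynomial σ K,
      f.IsHomogeneous n ∧ eval p.rep f ≠ 0 ∧ ∀ q ∈ T, eval q.rep f = 0 := by
  have hne (q : T) : p ≠ q := fun h => hp (h ▸ q.2)
  choose l hl hlp hlq using fun q : T => exists_linearForm_separating (hne q)
  obtain ⟨i, hi⟩ := Function.ne_iff.1 p.rep_nonzero
  refine ⟨(∏ q, l q) * X i ^ (n - T.card), ?_, ?_, fun q hq => ?_⟩
  · have h := (IsHomogeneous.prod Finset.univ l (fun _ => 1) fun q _ => hl q).mul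
      (isHomogeneous_X_pow i (n - T.card))
    simpa [hT] using h
  · rw [map_mul, map_prod, map_pow, eval_X]
    exact mul_ne_zero (Finset.prod_ne_zero_iff.2 fun q _ => hlp q) (pow_ne_zero _ hi)
  · rw [map_mul, map_prod, Finset.prod_eq_zero (Finset.mem_univ ⟨q, hq⟩) (hlq ⟨q, hq⟩), zero_mul]

/-- Evaluation of polynomials at the chosen representatives of finitely many points of projective
space: the conditions which these points impose on forms. -/
def evalAtPoints (T : Finset (ℙ K (σ → K))) : MvPolynomial σ K →ₗ[K] T → K :=
  LinearMap.pi fun p => (aeval p.1.rep).toLinearMap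

theorem evalAtPoints_apply (T : Finset (ℙ K (σ → K))) (f : MvPolynomial σ K) (p : T) :
    evalAtPoints T f p = eval p.1.rep f := rfl

theorem map_evalAtPoints_homogeneousSubmodule {T : Finset (ℙ K (σ → K))} {n : ℕ}
    (hT : T.card ≤ n + 1) : (homogeneousSubmodule σ K n).map (evalAtPoints T) = ⊤ := by
  classical
  have hcard (p : T) : (T.erase p).card ≤ n := by
    rw [Finset.card_erase_of_mem p.2]
    omega
  choose f hf hfp hfq using fun p : T =>
    exists_form_separating (Finset.notMem_erase p.1 T) (hcard p)
  refine eq_top_iff.2 fun y _ => ⟨∑ p, (y p / eval p.1.rep (f p)) • f p,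
    Submodule.sum_mem _ fun p _ => Submodule.smul_mem _ _ (hf p), ?_⟩
  ext q
  rw [evalAtPoints_apply, map_sum, Finset.sum_eq_single_of_mem q (Finset.mem_univ q)]
  · rw [smul_eval, div_mul_cancel₀ _ (hfp q)]
  · intro p _ hpq
    rw [smul_eval, hfq p q (Finset.mem_erase.2 ⟨Subtype.coe_ne_coe.2 hpq.symm, q.2⟩), mul_zero]

instance finiteDimensional_homogeneousSubmodule [Finite σ] (n : ℕ) :
    FiniteDimensional K (homogeneousSubmodule σ K n) :=
  Module.Finite.iff_fg.2 (homogeneousSubmodule_fg σ K n)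

theorem card_add_finrank_le_finrank_homogeneousSubmodule [Finite σ] {T : Finset (ℙ K (σ → K))}
    {n : ℕ} (hT : T.card ≤ n + 1) {S : Submodule K (MvPolynomial σ K)}
    (hS : S ≤ homogeneousSubmodule σ K n) (hST : ∀ f ∈ S, ↑T ⊆ projectiveZeros f) :
    T.card + finrank K S ≤ finrank K (homogeneousSubmodule σ K n) := by
  have hker : S ≤ homogeneousSubmodule σ K n ⊓ LinearMap.ker (evalAtPoints T) :=
    le_inf hS fun f hf => LinearMap.mem_ker.2 <| by ext p; exact hST f hf p.2
  have hle := Submodule.finrank_mono hker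
  have hrank := finrank_map_add_finrank_inf_ker (evalAtPoints T) (homogeneousSubmodule σ K n)
  rw [map_evalAtPoints_homogeneousSubmodule hT, finrank_top, finrank_fintype_fun_eq_card,
    Fintype.card_coe] at hrank
  omega

end Points

section Bezout

variable {K : Type*} [Field K]

section

variable {σ : Type*} {f g : MvPolynomial σ K} {m n : ℕ}

/-- The space `f · S_n` of multiples of `f` by forms of degree `n`, for counting the forms of a
given degree in the ideal generated by two forms. -/
def formMultiples (f : MvPolynomial σ K) (n : ℕ) : Submodule K (MvPolynomial σ K) :=
  (homogeneousSubmodule σ K n).map (LinearMap.mulLeft K f)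

theorem mem_formMultiples {x : MvPolynomial σ K} :
    x ∈ formMultiples f n ↔ ∃ a : MvPolynomial σ K, a.IsHomogeneous n ∧ f * a = x := Iff.rfl

instance finiteDimensional_formMultiples [Finite σ] (f : MvPolynomial σ K) (n : ℕ) :
    FiniteDimensional K (formMultiples f n) :=
  inferInstanceAs (FiniteDimensional K ((homogeneousSubmodule σ K n).map (LinearMap.mulLeft K f)))

theorem finrank_formMultiples (hf : f ≠ 0) (n : ℕ) :
    finrank K (formMultiples f n) = finrank K (homogeneousSubmodule σ K n) :=
  (Submodule.equivMapOfInjective _ (mul_right_injective₀ hf) _).finrank_eq.symm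

theorem formMultiples_le_homogeneousSubmodule (hf : f.IsHomogeneous m) (n : ℕ) :
    formMultiples f n ≤ homogeneousSubmodule σ K (m + n) := by
  rintro x ⟨a, ha, rfl⟩
  exact hf.mul ha

theorem formMultiples_inf_le (hf : f.IsHomogeneous m) (hg : g.IsHomogeneous n)
    (hfg : IsRelPrime f g) (k : ℕ) :
    formMultiples f (n + k) ⊓ formMultiples g (m + k) ≤ formMultiples (f * g) k := by
  rintro x ⟨⟨a, ha, rfl⟩, b, -, hab⟩
  rw [LinearMap.mulLeft_apply, LinearMap.mulLeft_apply] at hab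
  obtain ⟨c, rfl⟩ := hfg.dvd_of_dvd_mul_left ⟨a, hab⟩
  refine mem_formMultiples.2 ⟨homogeneousComponent k c, homogeneousComponent_isHomogeneous k c, ?_⟩
  have hmul : (f * a).IsHomogeneous (m + n + k) := add_assoc m n k ▸ hf.mul ha
  rw [LinearMap.mulLeft_apply, ← homogeneousComponent_add_mul_of_isHomogeneous (hf.mul hg),
    mul_assoc, mul_left_comm, hab, homogeneousComponent_eq_self hmul]

theorem card_add_finrank_add_finrank_le_finrank_add_finrank [Finite σ] (hf : f.IsHomogeneous m)
    (hg : g.IsHomogeneous n) (hf0 : f ≠ 0) (hg0 : g ≠ 0) (hfg : IsRelPrime f g)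
    {T : Finset (ℙ K (σ → K))} (hT : ↑T ⊆ projectiveZeros f ∩ projectiveZeros g)
    {k : ℕ} (hk : T.card ≤ m + n + k + 1) :
    T.card + finrank K (homogeneousSubmodule σ K (n + k)) +
        finrank K (homogeneousSubmodule σ K (m + k)) ≤
      finrank K (homogeneousSubmodule σ K (m + n + k)) +
        finrank K (homogeneousSubmodule σ K k) := by
  have hle : formMultiples f (n + k) ⊔ formMultiples g (m + k) ≤
      homogeneousSubmodule σ K (m + n + k) := by
    refine sup_le ?_ ?_
    · rw [add_assoc]
      exact formMultiples_le_homogeneousSubmodule hf _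
    · rw [add_comm m n, add_assoc]
      exact formMultiples_le_homogeneousSubmodule hg _
  have hvanish : ∀ x ∈ formMultiples f (n + k) ⊔ formMultiples g (m + k),
      ↑T ⊆ projectiveZeros x := by
    intro x hx p hp
    obtain ⟨_, ⟨a, -, rfl⟩, _, ⟨b, -, rfl⟩, rfl⟩ := Submodule.mem_sup.1 hx
    have hfp := mem_projectiveZeros.1 (hT hp).1
    have hgp := mem_projectiveZeros.1 (hT hp).2
    simp [mem_projectiveZeros, hfp, hgp]
  have hpoints := card_add_finrank_le_finrank_homogeneousSubmodule hk hle hvanish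
  have hsum := Submodule.finrank_sup_add_finrank_inf_eq
    (formMultiples f (n + k)) (formMultiples g (m + k))
  have hinf := Submodule.finrank_mono (formMultiples_inf_le hf hg hfg k)
  rw [finrank_formMultiples hf0, finrank_formMultiples hg0] at hsum
  rw [finrank_formMultiples (mul_ne_zero hf0 hg0)] at hinf
  omega

end

theorem encard_inter_projectiveZeros_le {f g : MvPolynomial (Fin 3) K} {m n : ℕ}
    (hf : f.IsHomogeneous m) (hg : g.IsHomogeneous n) (hf0 : f ≠ 0) (hg0 : g ≠ 0)
    (hfg : IsRelPrime f g) : (projectiveZeros f ∩ projectiveZeros g).encard ≤ (m * n : ℕ) := by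
  by_contra! h
  obtain ⟨T, hT, hcard⟩ := Set.exists_subset_encard_eq (Order.add_one_le_of_lt h)
  lift T to Finset (ℙ K (Fin 3 → K)) using Set.finite_of_encard_eq_coe hcard
  have hTcard : T.card = m * n + 1 := by
    rw [Set.encard_coe_eq_coe_finsetCard] at hcard
    exact_mod_cast hcard
  have hcount := card_add_finrank_add_finrank_le_finrank_add_finrank hf hg hf0 hg0 hfg hT
    (k := T.card) (by omega)
  simp only [finrank_homogeneousSubmodule, Nat.card_fin] at hcount
  have h₁ := two_mul_multichoose_three (n + T.card)
  have h₂ := two_mul_multichoose_three (m + T.card)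
  have h₃ := two_mul_multichoose_three (m + n + T.card)
  have h₄ := two_mul_multichoose_three T.card
  linarith

end Bezout

section AlgClosed

variable {σ K : Type*} [Field K] [IsAlgClosed K] {n : ℕ}

theorem exists_ne_zero_eval_eq_zero_of_isHomogeneous_fin_two {q : MvPolynomial (Fin 2) K}
    (hq : q.IsHomogeneous n) (hn : n ≠ 0) : ∃ v ≠ 0, eval v q = 0 := by
  set p : Polynomial K := aeval ![Polynomial.X, 1] q with hp
  have hpq (t : K) : p.eval t = eval ![t, 1] q := by
    have h : p.eval t = eval (fun i => (![Polynomial.X, 1] i : Polynomial K).eval t) q :=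
      comp_aeval_apply _ (Polynomial.aeval t) q
    rw [h]
    congr 2
    ext i
    fin_cases i <;> simp
  rcases eq_or_ne p.degree 0 with hdeg | hdeg
  · -- Here `p` is constant, so `q` is a multiple of `X 1 ^ n`.
    refine ⟨![1, 0], fun h => one_ne_zero (congrFun h 0), ?_⟩
    rw [← Polynomial.homogenize_eq_of_isHomogeneous hq hp.symm,
      Polynomial.eq_C_of_degree_eq_zero hdeg, Polynomial.homogenize_C]
    simp [hn]
  · obtain ⟨t, ht⟩ := IsAlgClosed.exists_root p hdeg
    exact ⟨![t, 1], fun h => one_ne_zero (congrFun h 1), (hpq t).symm.trans ht⟩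

theorem exists_mem_ne_zero_eval_eq_zero {f : MvPolynomial σ K} (hf : f.IsHomogeneous n)
    (hn : n ≠ 0) {V : Submodule K (σ → K)} (hV : 1 < finrank K V) :
    ∃ v ∈ V, v ≠ 0 ∧ eval v f = 0 := by
  have : Nontrivial V := nontrivial_of_finrank_pos (zero_lt_one.trans hV)
  obtain ⟨u, hu⟩ := exists_ne (0 : V)
  obtain ⟨w, huw⟩ := exists_linearIndependent_pair_of_one_lt_finrank hV hu
  have hq : (aeval (fun i => C (u.1 i) * X 0 + C (w.1 i) * X 1 : σ → MvPolynomial (Fin 2) K)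
      f).IsHomogeneous (1 * n) :=
    hf.aeval _ fun i => (isHomogeneous_C_mul_X _ _).add (isHomogeneous_C_mul_X _ _)
  obtain ⟨c, hc, hc0⟩ := exists_ne_zero_eval_eq_zero_of_isHomogeneous_fin_two hq (by simpa)
  refine ⟨c 0 • u + c 1 • w, (c 0 • u + c 1 • w).2, fun h => hc ?_, ?_⟩
  · obtain ⟨h₀, h₁⟩ := LinearIndependent.pair_iff.1 huw (c 0) (c 1) (Subtype.ext h)
    ext i
    fin_cases i
    exacts [h₀, h₁]
  · rw [← hc0, eval_aeval]
    congr 2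
    ext i
    simp [mul_comm]

theorem infinite_projectiveZeros (hσ : 2 < Nat.card σ) {f : MvPolynomial σ K}
    (hf : f.IsHomogeneous n) (hn : n ≠ 0) : (projectiveZeros f).Infinite := by
  intro hfin
  have := hfin.to_subtype
  obtain ⟨l, hl⟩ := exists_dual_forall_apply_ne_zero (K := K)
    (fun p : projectiveZeros f => p.1.rep) fun p => p.1.rep_nonzero
  have hker : 1 < finrank K (LinearMap.ker l) := by
    have : Finite σ := Nat.finite_of_card_ne_zero (pos_of_gt hσ).ne'
    cases nonempty_fintype σ
    have hrank := l.finrank_range_add_finrank_ker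
    have hle := Submodule.finrank_le (LinearMap.range l)
    rw [finrank_fintype_fun_eq_card, ← Nat.card_eq_fintype_card] at hrank
    rw [finrank_self] at hle
    omega
  obtain ⟨v, hv, hv0, hfv⟩ := exists_mem_ne_zero_eval_eq_zero hf hn hker
  obtain ⟨a, ha⟩ := Projectivization.exists_smul_eq_mk_rep K v hv0
  refine hl ⟨.mk K v hv0, (mk_mem_projectiveZeros hf hv0).2 hfv⟩ ?_
  rw [← ha, Units.smul_def, map_smul, LinearMap.mem_ker.1 hv, smul_zero]

theorem isRelPrime_of_finite_inter_projectiveZeros (hσ : 2 < Nat.card σ)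
    {f g : MvPolynomial σ K} {m : ℕ} (hf : f.IsHomogeneous m) (hg : g.IsHomogeneous n)
    (hfin : (projectiveZeros f ∩ projectiveZeros g).Finite) : IsRelPrime f g := by
  intro d hdf hdg
  set t := homogeneousComponent d.totalDegree d with ht
  have hsub : projectiveZeros t ⊆ projectiveZeros f ∩ projectiveZeros g :=
    Set.subset_inter
      (projectiveZeros_subset_of_dvd (homogeneousComponent_totalDegree_dvd hf hdf))
      (projectiveZeros_subset_of_dvd (homogeneousComponent_totalDegree_dvd hg hdg))
  have htfin := hfin.subset hsub
  have hdeg : d.totalDegree = 0 := by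
    by_contra h
    exact infinite_projectiveZeros hσ (homogeneousComponent_isHomogeneous _ d) h htfin
  have hd : d = t := by
    rw [ht, hdeg, homogeneousComponent_zero]
    exact totalDegree_eq_zero_iff_eq_C.1 hdeg
  have hd0 : d ≠ 0 := by
    rintro rfl
    exact infinite_projectiveZeros hσ (hd ▸ isHomogeneous_zero σ K 1) one_ne_zero htfin
  rw [totalDegree_eq_zero_iff_eq_C.1 hdeg] at hd0 ⊢
  exact (C_ne_zero.1 hd0).isUnit.map C

end AlgClosed

section Cone

variable {K V W : Type*} [DivisionRing K] [AddCommGroup V] [Module K V] [AddCommGroup W]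
  [Module K W] {ι : V →ₗ[K] W} {e : W}

/-- The linear cone with vertex `e` over the image of `D` under `ι`. -/
def coneOver (ι : V →ₗ[K] W) (e : W) (D : Submodule K V) : Submodule K W :=
  Submodule.span K {e} ⊔ D.map ι

theorem mem_coneOver {D : Submodule K V} {w : W} :
    w ∈ coneOver ι e D ↔ ∃ t : K, ∃ a ∈ D, t • e + ι a = w := by
  simp [coneOver, Submodule.mem_sup, Submodule.mem_span_singleton]

theorem comap_coneOver (hι : Function.Injective ι) (he : e ∉ LinearMap.range ι)
    (D : Submodule K V) : (coneOver ι e D).comap ι = D := by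
  ext a
  rw [Submodule.mem_comap, mem_coneOver]
  refine ⟨?_, fun ha => ⟨0, a, ha, by simp⟩⟩
  rintro ⟨t, b, hb, h⟩
  have hte : t • e ∈ LinearMap.range ι := ⟨a - b, by rw [map_sub, ← h, add_sub_cancel_right]⟩
  obtain rfl : t = 0 := by
    by_contra ht
    exact he ((Submodule.smul_mem_iff _ ht).1 hte)
  rw [zero_smul, zero_add] at h
  exact hι h ▸ hb

theorem coneOver_comap {L : Submodule K W} (he : e ∈ L)
    (hL : L ≤ coneOver ι e ⊤) : coneOver ι e (L.comap ι) = L := by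
  rw [coneOver, Submodule.map_top] at hL
  rw [coneOver, Submodule.map_comap_eq,
    ← sup_inf_assoc_of_le _ ((Submodule.span_singleton_le_iff_mem e L).2 he), inf_eq_right.2 hL]

theorem finrank_coneOver [FiniteDimensional K W] (hι : Function.Injective ι)
    (he : e ∉ LinearMap.range ι) (D : Submodule K V) :
    finrank K (coneOver ι e D) = finrank K D + 1 := by
  rw [coneOver, sup_comm,
    Submodule.finrank_sup_span_singleton fun h => he (LinearMap.map_le_range h),
    (Submodule.equivMapOfInjective ι hι D).finrank_eq]

end Cone

theorem isHomogeneous_restrict0 {P : MvPolynomial (Fin 4) ℂ} {n : ℕ} (hP : P.IsHomogeneous n) :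
    (restrict0 P).IsHomogeneous n := by
  rw [← one_mul n]
  refine hP.aeval _ fun i => ?_
  induction i using Fin.lastCases with
  | last => rw [Fin.snoc_last]; exact isHomogeneous_zero _ _ _
  | cast i => rw [Fin.snoc_castSucc]; exact isHomogeneous_X ℂ i

/-- The inclusion of the plane `x₀ = x₄ = 0` in `ℂ⁵`. -/
def planeInclusion : (Fin 3 → ℂ) →ₗ[ℂ] (Fin 5 → ℂ) where
  toFun a := ![0, a 0, a 1, a 2, 0]
  map_add' a b := by ext i; fin_cases i <;> simp
  map_smul' k a := by ext i; fin_cases i <;> simp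

theorem planeInclusion_apply (a : Fin 3 → ℂ) : planeInclusion a = ![0, a 0, a 1, a 2, 0] := rfl

theorem planeInclusion_injective : Function.Injective planeInclusion := by
  intro a b h
  ext i
  fin_cases i
  exacts [congrFun h 1, congrFun h 2, congrFun h 3]

theorem e₀_notMem_range_planeInclusion : e₀ ∉ LinearMap.range planeInclusion := by
  rintro ⟨a, ha⟩
  simpa [planeInclusion_apply, e₀] using congrFun ha 0

theorem mem_coneOver_planeInclusion_top {v : Fin 5 → ℂ} (hv : v 4 = 0) :
    v ∈ coneOver planeInclusion e₀ ⊤ := by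
  refine mem_coneOver.2 ⟨v 0, ![v 1, v 2, v 3], Submodule.mem_top, ?_⟩
  ext i
  fin_cases i <;> simp [e₀, planeInclusion_apply, hv]

theorem eval_restrict0 (P : MvPolynomial (Fin 4) ℂ) (a : Fin 3 → ℂ) :
    eval a (restrict0 P) = eval (planeInclusion a ∘ Fin.succ) P := by
  rw [restrict0, eval_aeval]
  congr 2
  ext i
  induction i using Fin.lastCases with
  | last => rw [Fin.snoc_last, map_zero]; rfl
  | cast i => rw [Fin.snoc_castSucc, eval_X]; fin_cases i <;> rfl

theorem eval_cubicF (Q C : MvPolynomial (Fin 4) ℂ) (v : Fin 5 → ℂ) :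
    eval v (cubicF Q C) =
      v 0 ^ 2 * v 4 + v 0 * eval (v ∘ Fin.succ) Q + eval (v ∘ Fin.succ) C := by
  simp [cubicF, eval_rename]

theorem smul_e₀_add_comp_succ (t : ℂ) (v : Fin 5 → ℂ) :
    (t • e₀ + v) ∘ Fin.succ = v ∘ Fin.succ := by
  ext i
  simp [e₀]

theorem eval_smul_e₀_add_planeInclusion_cubicF (Q C : MvPolynomial (Fin 4) ℂ) (t : ℂ)
    (a : Fin 3 → ℂ) : eval (t • e₀ + planeInclusion a) (cubicF Q C) =
      t * eval a (restrict0 Q) + eval a (restrict0 C) := by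
  rw [eval_cubicF, smul_e₀_add_comp_succ, eval_restrict0, eval_restrict0]
  simp [e₀, planeInclusion_apply]

section Lines

variable {Q C : MvPolynomial (Fin 4) ℂ}

theorem apply_four_eq_zero_of_mem_linesThrough {W : Submodule ℂ (Fin 5 → ℂ)}
    (hW : W ∈ LinesThrough (cubicF Q C)) {v : Fin 5 → ℂ} (hv : v ∈ W) : v 4 = 0 := by
  have hzero (t : ℂ) : (t + v 0) ^ 2 * v 4 + (t + v 0) * eval (v ∘ Fin.succ) Q +
      eval (v ∘ Fin.succ) C = 0 := by
    have h := hW.2.2 _ (W.add_mem (W.smul_mem t hW.2.1) hv)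
    rw [eval_cubicF, smul_e₀_add_comp_succ] at h
    simpa [e₀] using h
  -- Second difference in `t` isolates the leading coefficient.
  linear_combination (hzero 1 + hzero (-1) - 2 * hzero 0) / 2

theorem coneOver_comap_of_mem_linesThrough {W : Submodule ℂ (Fin 5 → ℂ)}
    (hW : W ∈ LinesThrough (cubicF Q C)) :
    coneOver planeInclusion e₀ (W.comap planeInclusion) = W :=
  coneOver_comap hW.2.1 fun _ hv =>
    mem_coneOver_planeInclusion_top (apply_four_eq_zero_of_mem_linesThrough hW hv)

theorem finrank_coneOver_planeInclusion (D : Submodule ℂ (Fin 3 → ℂ)) :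
    finrank ℂ (coneOver planeInclusion e₀ D) = finrank ℂ D + 1 :=
  finrank_coneOver planeInclusion_injective e₀_notMem_range_planeInclusion D

theorem coneOver_mem_linesThrough {D : Submodule ℂ (Fin 3 → ℂ)} (hD : D ∈ ConicCubicPts Q C) :
    coneOver planeInclusion e₀ D ∈ LinesThrough (cubicF Q C) := by
  refine ⟨by rw [finrank_coneOver_planeInclusion, hD.1],
    mem_coneOver.2 ⟨1, 0, D.zero_mem, by simp⟩, fun v hv => ?_⟩
  obtain ⟨t, a, ha, rfl⟩ := mem_coneOver.1 hv
  rw [eval_smul_e₀_add_planeInclusion_cubicF, (hD.2 a ha).1, (hD.2 a ha).2, mul_zero, add_zero]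

theorem comap_mem_conicCubicPts {W : Submodule ℂ (Fin 5 → ℂ)}
    (hW : W ∈ LinesThrough (cubicF Q C)) : W.comap planeInclusion ∈ ConicCubicPts Q C := by
  refine ⟨?_, fun a ha => ?_⟩
  · have h := finrank_coneOver_planeInclusion (W.comap planeInclusion)
    rw [coneOver_comap_of_mem_linesThrough hW, hW.1] at h
    omega
  · have hzero (t : ℂ) : t * eval a (restrict0 Q) + eval a (restrict0 C) = 0 := by
      rw [← eval_smul_e₀_add_planeInclusion_cubicF]
      exact hW.2.2 _ (W.add_mem (W.smul_mem t hW.2.1) ha)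
    exact ⟨by linear_combination hzero 1 - hzero 0, by linear_combination hzero 0⟩

/-- The bijection sending a line through `x = [1,0,0,0,0]` to its intersection with the plane
`x₀ = x₄ = 0`; its inverse sends a point of that plane to the line joining it to `x`. -/
def linesThroughEquiv (Q C : MvPolynomial (Fin 4) ℂ) :
    LinesThrough (cubicF Q C) ≃ ConicCubicPts Q C where
  toFun W := ⟨W.1.comap planeInclusion, comap_mem_conicCubicPts W.2⟩
  invFun D := ⟨coneOver planeInclusion e₀ D.1, coneOver_mem_linesThrough D.2⟩
  left_inv W := Subtype.ext (coneOver_comap_of_mem_linesThrough W.2)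
  right_inv D := Subtype.ext <|
    comap_coneOver planeInclusion_injective e₀_notMem_range_planeInclusion D.1

end Lines

theorem lines_through_point_are_conic_cubic_intersection_general
    (Q C : MvPolynomial (Fin 4) ℂ)
    (hQ : Q.IsHomogeneous 2) (hC : C.IsHomogeneous 3)
    (hEck : (LinesThrough (cubicF Q C)).Finite) :
    (∃ f : LinesThrough (cubicF Q C) ≃ ConicCubicPts Q C,
      ∀ (W : LinesThrough (cubicF Q C)) (a : Fin 3 → ℂ),
        a ∈ (f W : Submodule ℂ (Fin 3 → ℂ)) ↔
          (![0, a 0, a 1, a 2, 0] : Fin 5 → ℂ) ∈ (W : Submodule ℂ (Fin 5 → ℂ))) ∧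
    restrict0 Q ≠ 0 ∧ restrict0 C ≠ 0 ∧
    (∀ d : MvPolynomial (Fin 3) ℂ, d ∣ restrict0 Q → d ∣ restrict0 C → IsUnit d) ∧
    (ConicCubicPts Q C).Finite ∧ (ConicCubicPts Q C).ncard ≤ 6 := by
  have hq := isHomogeneous_restrict0 hQ
  have hc := isHomogeneous_restrict0 hC
  have hpts : Projectivization.submodule ''
      (projectiveZeros (restrict0 Q) ∩ projectiveZeros (restrict0 C)) = ConicCubicPts Q C :=
    image_submodule_inter_projectiveZeros hq hc
  have hfin : (ConicCubicPts Q C).Finite :=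
    have := hEck.to_subtype
    Finite.of_equiv _ (linesThroughEquiv Q C)
  have hrel : IsRelPrime (restrict0 Q) (restrict0 C) :=
    isRelPrime_of_finite_inter_projectiveZeros (by simp) hq hc <|
      (hpts ▸ hfin).of_finite_image Projectivization.submodule_injective.injOn
  have hq0 := ne_zero_of_isRelPrime_of_isHomogeneous hrel hc three_ne_zero
  have hc0 := ne_zero_of_isRelPrime_of_isHomogeneous hrel.symm hq two_ne_zero
  have hcard : (ConicCubicPts Q C).encard ≤ (2 * 3 : ℕ) := by
    rw [← hpts, Projectivization.submodule_injective.encard_image]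
    exact encard_inter_projectiveZeros_le hq hc hq0 hc0 hrel
  exact ⟨⟨linesThroughEquiv Q C, fun _ _ => Iff.rfl⟩, hq0, hc0, fun _ => @hrel _,
    Set.encard_le_coe_iff_finite_ncard_le.1 hcard⟩

/-- Let `X = V(F)` be a smooth cubic threefold with `F` in the above normal form at the
non-Eckardt point `x = [1,0,0,0,0]` (non-Eckardt: only finitely many lines of `X` pass
through `x`).  Then the lines of `X` through `x` correspond exactly (via the direction of
the line in `{x₀ = 0, x₄ = 0}`) to the intersection points of the plane conic
`V(Q(x₁,x₂,x₃,0))` and plane cubic `V(C(x₁,x₂,x₃,0))`; these two curves have no common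
component, and in particular there are six such lines counted with multiplicity (so at
most six, and finitely many, set-theoretically). -/
theorem lines_through_point_are_conic_cubic_intersection
    (Q C : MvPolynomial (Fin 4) ℂ)
    (hQ : Q.IsHomogeneous 2) (hC : C.IsHomogeneous 3)
    (hsmooth : ∀ x : Fin 5 → ℂ, x ≠ 0 → eval x (cubicF Q C) = 0 →
      ∃ i, eval x (pderiv i (cubicF Q C)) ≠ 0)
    (hEck : (LinesThrough (cubicF Q C)).Finite) :
    (∃ f : LinesThrough (cubicF Q C) ≃ ConicCubicPts Q C,
      ∀ (W : LinesThrough (cubicF Q C)) (a : Fin 3 → ℂ),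
        a ∈ (f W : Submodule ℂ (Fin 3 → ℂ)) ↔
          (![0, a 0, a 1, a 2, 0] : Fin 5 → ℂ) ∈ (W : Submodule ℂ (Fin 5 → ℂ))) ∧
    restrict0 Q ≠ 0 ∧ restrict0 C ≠ 0 ∧
    (∀ d : MvPolynomial (Fin 3) ℂ, d ∣ restrict0 Q → d ∣ restrict0 C → IsUnit d) ∧
    (ConicCubicPts Q C).Finite ∧ (ConicCubicPts Q C).ncard ≤ 6 :=
  lines_through_point_are_conic_cubic_intersection_general Q C hQ hC hEck

end
end

section
/- Let X be a smooth cubic threefold and S its Fano surface of lines. Then every morphism from P^1 to S is constant; equivalently, S contains no rational curves. -/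
open Module MvPolynomial

/-!
Let `S` be the Fano surface of a smooth cubic threefold. Its tangent bundle is the tautological
bundle of rank two (tangent bundle theorem), which is negative, whereas the tangent bundle of `ℙ¹`
is positive; hence the differential of a morphism `ℙ¹ → S` vanishes. In characteristic zero it
follows that the Plücker forms of the morphism, which have no common zero, have vanishing
derivatives, so that they are constant.

Concretely, for a line through `a` and `b` the gradient of the cubic at `x a + y b` is a net of
conormal vectors `x² A + x y E + y² C` without base points, and the equations of a tangent vector
of `S` are solved by a two-dimensional space of coordinates `p, q` with respect to this net.
-/

section

open scoped Matrix

theorem exists_binary_quadratic_eq_zero {K : Type*} [Field K] [IsAlgClosed K] (n : Fin 3 → K) :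
    ∃ x y : K, ¬(x = 0 ∧ y = 0) ∧ n ⬝ᵥ ![x ^ 2, x * y, y ^ 2] = 0 := by
  by_cases hn : n 0 = 0
  · exact ⟨1, 0, by simp, by simp [dotProduct, Fin.sum_univ_three, hn]⟩
  obtain ⟨x, hx⟩ := IsAlgClosed.exists_root
    (.C (n 0) * .X ^ 2 + .C (n 1) * .X + .C (n 2) : Polynomial K)
    (by rw [Polynomial.degree_quadratic hn]; decide)
  refine ⟨x, 1, by simp, ?_⟩
  simpa [dotProduct, Fin.sum_univ_three, Polynomial.IsRoot] using hx

/-- The net of binary quadrics `A x² + E x y + C y²` has no base point. -/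
def BasePointFree (K : Type*) {V : Type*} [Field K] [AddCommGroup V] [Module K V] (A E C : V) :
    Prop :=
  ∀ x y : K, (x ^ 2) • A + (x * y) • E + (y ^ 2) • C = 0 → x = 0 ∧ y = 0

section Hankel

variable {K V : Type*} [Field K] [AddCommGroup V] [Module K V] {A E C : V} {l₀ l₁ l₂ l₃ : K}

theorem BasePointFree.eq_zero_of_geometric (h : BasePointFree K A E C)
    (h₁ : l₀ • A + l₁ • E + l₂ • C = 0) (h₂ : l₁ • A + l₂ • E + l₃ • C = 0) {g₁ g₂ : K}
    (hg : g₁ ≠ 0 ∨ g₂ ≠ 0) (hg₀₁ : g₁ * l₀ + g₂ * l₁ = 0) (hg₁₂ : g₁ * l₁ + g₂ * l₂ = 0)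
    (hg₂₃ : g₁ * l₂ + g₂ * l₃ = 0) : l₀ = 0 ∧ l₁ = 0 ∧ l₂ = 0 ∧ l₃ = 0 := by
  by_cases hg₂ : g₂ = 0
  · have hC : C ≠ 0 := fun hC => one_ne_zero (h 0 1 (by simp [hC])).2
    simp_all
  · have hl₀ : l₀ = 0 := by
      by_contra hl₀
      have hbase : l₀ • ((g₂ ^ 2) • A + (g₂ * -g₁) • E + ((-g₁) ^ 2) • C) = 0 := by
        linear_combination (norm := module) g₂ ^ 2 • h₁ - g₂ • congr($hg₀₁ • E)
          + g₁ • congr($hg₀₁ • C) - g₂ • congr($hg₁₂ • C)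
      exact hg₂ (h g₂ (-g₁) ((smul_eq_zero.1 hbase).resolve_left hl₀)).1
    simp_all

-- The two Hankel rows are coplanar with some point `(x², xy, y²)` of the Veronese conic.
theorem BasePointFree.eq_zero_of_hankel [IsAlgClosed K] (h : BasePointFree K A E C)
    (h₁ : l₀ • A + l₁ • E + l₂ • C = 0) (h₂ : l₁ • A + l₂ • E + l₃ • C = 0) :
    l₀ = 0 ∧ l₁ = 0 ∧ l₂ = 0 ∧ l₃ = 0 := by
  obtain ⟨x, y, hxy, hn⟩ := exists_binary_quadratic_eq_zero (![l₀, l₁, l₂] ⨯₃ ![l₁, l₂, l₃])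
  obtain ⟨g, hg, hrel⟩ := Matrix.exists_vecMul_eq_zero_iff.2
    (show Matrix.det ![![x ^ 2, x * y, y ^ 2], ![l₀, l₁, l₂], ![l₁, l₂, l₃]] = 0 by
      rw [← triple_product_eq_det, dotProduct_comm, hn])
  have hg₀ := congrFun hrel 0
  have hg₁ := congrFun hrel 1
  have hg₂ := congrFun hrel 2
  simp only [Matrix.vecMul, dotProduct, Fin.sum_univ_three, Matrix.cons_val, Pi.zero_apply]
    at hg₀ hg₁ hg₂
  have hveronese : g 0 = 0 := by
    by_contra hg0
    have hbase : g 0 • ((x ^ 2) • A + (x * y) • E + (y ^ 2) • C) = 0 := by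
      linear_combination (norm := module) congr($hg₀ • A) + congr($hg₁ • E) + congr($hg₂ • C)
        - g 1 • h₁ - g 2 • h₂
    exact hxy (h x y ((smul_eq_zero.1 hbase).resolve_left hg0))
  rw [hveronese, zero_mul, zero_add] at hg₀ hg₁ hg₂
  refine h.eq_zero_of_geometric h₁ h₂ ?_ hg₀ hg₁ hg₂
  contrapose! hg
  ext i
  fin_cases i
  exacts [hveronese, hg.1, hg.2]

end Hankel

section Net

variable {K : Type*} [Field K] {A E C : Fin 3 → K}

theorem exists_eq_smul_of_cross_eq_zero {n w : Fin 3 → K} (hn : n ≠ 0) (h : n ⨯₃ w = 0) :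
    ∃ r : K, w = r • n := by
  by_contra! hw
  refine crossProduct_ne_zero_iff_linearIndependent.2 ?_ h
  rw [LinearIndependent.pair_iff' hn]
  exact fun r hr => hw r hr.symm

theorem BasePointFree.eq_zero_of_cross [IsAlgClosed K] (h : BasePointFree K A E C) {p q : K}
    (hP : p • A ⨯₃ E + q • A ⨯₃ C = 0) (hR : p • A ⨯₃ C + q • E ⨯₃ C = 0) : p = 0 ∧ q = 0 := by
  have hA : A ≠ 0 := fun hA => one_ne_zero (h 1 0 (by simp [hA])).1
  have hC : C ≠ 0 := fun hC => one_ne_zero (h 0 1 (by simp [hC])).2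
  obtain ⟨r, hr⟩ := exists_eq_smul_of_cross_eq_zero (w := p • E + q • C) hA
    (by simpa only [map_add, map_smul] using hP)
  obtain ⟨s, hs⟩ := exists_eq_smul_of_cross_eq_zero (w := p • A + q • E) hC
    (by rw [← cross_anticomm, neg_eq_zero]
        simpa only [map_add, map_smul, LinearMap.add_apply, LinearMap.smul_apply] using hR)
  obtain ⟨-, hp, hq, -⟩ := h.eq_zero_of_hankel (l₀ := -r) (l₁ := p) (l₂ := q) (l₃ := -s)
    (by rw [add_assoc, hr, neg_smul, neg_add_cancel]) (by rw [hs, neg_smul, add_neg_cancel])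
  exact ⟨hp, hq⟩

/-- The four coefficients of the binary cubic `(x P + y R) · (A x² + E x y + C y²)`, as a linear map
in `(P, R)`. -/
def netPairing (A E C : Fin 3 → K) : (Fin 3 → K) × (Fin 3 → K) →ₗ[K] Fin 4 → K :=
  let P := LinearMap.fst K (Fin 3 → K) (Fin 3 → K)
  let R := LinearMap.snd K (Fin 3 → K) (Fin 3 → K)
  let ev := dotProductBilin K K
  LinearMap.pi ![ev A ∘ₗ P, ev E ∘ₗ P + ev A ∘ₗ R, ev C ∘ₗ P + ev E ∘ₗ R, ev C ∘ₗ R]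

/-- The linear syzygies of the net `A x² + E x y + C y²` given by cross products: `(p, q)` goes to
the pair `(P, R)` for which `x P + y R` is orthogonal to the net. -/
def netCross (A E C : Fin 3 → K) : K × K →ₗ[K] (Fin 3 → K) × (Fin 3 → K) :=
  (LinearMap.toSpanSingleton K _ (A ⨯₃ E, A ⨯₃ C)).coprod
    (LinearMap.toSpanSingleton K _ (A ⨯₃ C, E ⨯₃ C))

theorem BasePointFree.range_netPairing [IsAlgClosed K] (h : BasePointFree K A E C) :
    LinearMap.range (netPairing A E C) = ⊤ := by
  by_contra hne
  obtain ⟨f, hf, hle⟩ := Submodule.exists_le_ker_of_lt_top _ (lt_top_iff_ne_top.2 hne)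
  obtain ⟨l, rfl⟩ := (dotProductEquiv K (Fin 4)).surjective f
  have hl (P R : Fin 3 → K) : l 0 * A ⬝ᵥ P + l 1 * (E ⬝ᵥ P + A ⬝ᵥ R)
      + l 2 * (C ⬝ᵥ P + E ⬝ᵥ R) + l 3 * C ⬝ᵥ R = 0 := by
    have := hle (LinearMap.mem_range_self (netPairing A E C) (P, R))
    rwa [LinearMap.mem_ker, dotProductEquiv_apply_apply, dotProduct, Fin.sum_univ_four] at this
  obtain ⟨h₀, h₁, h₂, h₃⟩ := h.eq_zero_of_hankel (l₀ := l 0) (l₁ := l 1) (l₂ := l 2) (l₃ := l 3)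
    (by ext i; simpa using hl (Pi.single i 1) 0) (by ext i; simpa using hl 0 (Pi.single i 1))
  refine hf ((LinearEquiv.map_eq_zero_iff _).2 ?_)
  ext i
  fin_cases i
  exacts [h₀, h₁, h₂, h₃]

theorem BasePointFree.range_netCross [IsAlgClosed K] (h : BasePointFree K A E C) :
    LinearMap.range (netCross A E C) = LinearMap.ker (netPairing A E C) := by
  have hinj : LinearMap.ker (netCross A E C) = ⊥ := by
    refine LinearMap.ker_eq_bot'.2 fun ⟨p, q⟩ hpq => ?_
    simp only [netCross, LinearMap.coprod_apply, LinearMap.toSpanSingleton_apply, Prod.smul_mk,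
      Prod.mk_add_mk, Prod.mk_eq_zero] at hpq
    exact Prod.mk_eq_zero.2 (h.eq_zero_of_cross hpq.1 hpq.2)
  refine Submodule.eq_of_le_of_finrank_eq ?_ ?_
  · rintro _ ⟨⟨p, q⟩, rfl⟩
    ext i
    fin_cases i
    all_goals
      simp only [netCross, netPairing, cross_apply, dotProduct, Fin.sum_univ_three,
        LinearMap.coprod_apply, LinearMap.toSpanSingleton_apply, LinearMap.pi_apply,
        LinearMap.comp_apply, LinearMap.add_apply, LinearMap.fst_apply, LinearMap.snd_apply,
        dotProductBilin_apply_apply, Prod.smul_mk, Prod.mk_add_mk, Pi.add_apply, Pi.smul_apply,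
        Pi.zero_apply, smul_eq_mul, Matrix.cons_val, Fin.reduceFinMk, Fin.zero_eta, Fin.mk_one]
      ring
  · have hcross := LinearMap.finrank_range_add_finrank_ker (netCross A E C)
    have hpairing := LinearMap.finrank_range_add_finrank_ker (netPairing A E C)
    rw [hinj] at hcross
    rw [h.range_netPairing] at hpairing
    simp only [finrank_bot, finrank_top, finrank_prod, finrank_self, finrank_fin_fun] at *
    omega

theorem BasePointFree.exists_cross [IsAlgClosed K] (h : BasePointFree K A E C) {P R : Fin 3 → K}
    (h₀ : A ⬝ᵥ P = 0) (h₁ : E ⬝ᵥ P + A ⬝ᵥ R = 0) (h₂ : C ⬝ᵥ P + E ⬝ᵥ R = 0)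
    (h₃ : C ⬝ᵥ R = 0) :
    ∃ p q : K, P = p • A ⨯₃ E + q • A ⨯₃ C ∧ R = p • A ⨯₃ C + q • E ⨯₃ C := by
  have hker : (P, R) ∈ LinearMap.ker (netPairing A E C) := by
    ext i
    fin_cases i
    exacts [h₀, h₁, h₂, h₃]
  rw [← h.range_netCross] at hker
  obtain ⟨⟨p, q⟩, hpq⟩ := hker
  obtain ⟨hP, hR⟩ := Prod.mk.inj hpq
  exact ⟨p, q, hP.symm, hR.symm⟩

end Net

section Frame

variable {K : Type*} [Field K] {a b : Fin 5 → K}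

theorem mem_span_pair_of_forall_det_eq_zero (hab : LinearIndependent K ![a, b]) {p : Fin 5 → K}
    (h : ∀ u v, (Matrix.of ![u, v, p, a, b]).det = 0) : p ∈ Submodule.span K {a, b} := by
  by_contra hp
  have hpab : LinearIndependent K ![p, a, b] :=
    linearIndependent_finCons.2 ⟨hab, by rwa [Matrix.range_cons_cons_empty]⟩
  obtain ⟨v, hv⟩ := exists_linearIndependent_cons_of_lt_finrank hpab (by simp)
  obtain ⟨u, hu⟩ := exists_linearIndependent_cons_of_lt_finrank hv (by simp)
  exact ((Matrix.isUnit_iff_isUnit_det _).1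
    (Matrix.linearIndependent_rows_iff_isUnit.1 hu)).ne_zero (h u v)

theorem det_of_single_single {R : Type*} [CommRing R] (u v p : Fin 5 → R) :
    (Matrix.of ![u, v, p, Pi.single 3 1, Pi.single 4 1]).det =
      (Matrix.of ![u ∘ ![0, 1, 2], v ∘ ![0, 1, 2], p ∘ ![0, 1, 2]]).det := by
  rw [Matrix.det_succ_row _ 4, Fin.sum_univ_five]
  simp only [Matrix.of_apply, Matrix.cons_val, Pi.single_apply, Fin.reduceEq, if_true, if_false,
    mul_zero, zero_mul, zero_add]
  rw [Matrix.det_succ_row _ 3, Fin.sum_univ_four]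
  simp [Matrix.det_fin_three, Fin.succAbove, Fin.lt_def, Even.neg_pow (show Even 8 by decide),
    Even.neg_pow (show Even 6 by decide)]

theorem exists_frame (hab : LinearIndependent K ![a, b]) :
    ∃ (δ : K) (π : (Fin 5 → K) →ₗ[K] Fin 3 → K), Function.Surjective π ∧
      ∀ u v p, (Matrix.of ![u, v, p, a, b]).det = δ * (π p ⬝ᵥ π u ⨯₃ π v) := by
  obtain ⟨z, hz⟩ := exists_linearIndependent_cons_of_lt_finrank hab (by simp)
  obtain ⟨y, hy⟩ := exists_linearIndependent_cons_of_lt_finrank hz (by simp)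
  obtain ⟨x, hx⟩ := exists_linearIndependent_cons_of_lt_finrank hy (by simp)
  let e := basisOfLinearIndependentOfCardEqFinrank hx (by simp)
  have he : ⇑e = ![x, y, z, a, b] := coe_basisOfLinearIndependentOfCardEqFinrank hx _
  let T : Matrix (Fin 5) (Fin 5) K := .of e
  have hcoord (p : Fin 5 → K) : p = e.equivFun p ᵥ* T := by
    rw [Matrix.vecMul_eq_sum]
    exact (e.sum_equivFun p).symm
  let π := LinearMap.funLeft K K ![0, 1, 2] ∘ₗ e.equivFun.toLinearMap
  have hπ : Function.Surjective π :=
    (LinearMap.funLeft_surjective_of_injective K K ![0, 1, 2] (by decide)).comp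
      e.equivFun.surjective
  refine ⟨T.det, π, hπ, fun u v p => ?_⟩
  have hM : Matrix.of ![u, v, p, a, b] =
      Matrix.of ![e.equivFun u, e.equivFun v, e.equivFun p, Pi.single 3 1, Pi.single 4 1] * T := by
    funext i
    rw [Matrix.mul_apply_eq_vecMul]
    fin_cases i
    · exact hcoord u
    · exact hcoord v
    · exact hcoord p
    · exact (congrFun he 3).symm.trans (Matrix.single_one_vecMul _ _).symm
    · exact (congrFun he 4).symm.trans (Matrix.single_one_vecMul _ _).symm
  rw [hM, Matrix.det_mul, det_of_single_single, mul_comm, triple_product_permutation,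
    triple_product_eq_det]
  rfl

theorem exists_dotProduct_eq_dotProduct_comp {K m n : Type*} [Field K] [Fintype m] [Fintype n]
    {π : (m → K) →ₗ[K] n → K} (hπ : Function.Surjective π) {B : m → K}
    (hB : ∀ v, π v = 0 → B ⬝ᵥ v = 0) : ∃ B' : n → K, ∀ v, B ⬝ᵥ v = B' ⬝ᵥ π v := by
  classical
  obtain ⟨σ, hσ⟩ := π.exists_rightInverse_of_surjective (LinearMap.range_eq_top.2 hπ)
  obtain ⟨B', hB'⟩ := (dotProductEquiv K n).surjective (dotProductBilin K K B ∘ₗ σ)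
  refine ⟨B', fun v => ?_⟩
  have hv : B ⬝ᵥ (v - σ (π v)) = 0 :=
    hB _ (by rw [map_sub, ← LinearMap.comp_apply π σ, hσ, LinearMap.id_apply, sub_self])
  rw [dotProduct_sub, sub_eq_zero] at hv
  exact hv.trans (LinearMap.congr_fun hB' (π v)).symm

theorem eq_zero_of_forall_dot_cross {R : Type*} [CommRing R] {w : Fin 3 → R}
    (h : ∀ u v : Fin 3 → R, w ⬝ᵥ u ⨯₃ v = 0) : w = 0 := by
  funext k
  fin_cases k
  · simpa [cross_apply, dotProduct, Fin.sum_univ_three] using h ![0, 1, 0] ![0, 0, 1]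
  · simpa [cross_apply, dotProduct, Fin.sum_univ_three] using h ![0, 0, 1] ![1, 0, 0]
  · simpa [cross_apply, dotProduct, Fin.sum_univ_three] using h ![1, 0, 0] ![0, 1, 0]

end Frame

section ConormalNet

/-- The alternating form `A ∧ B` evaluated on two vectors. -/
def wedge {R ι : Type*} [CommRing R] [Fintype ι] (A B u v : ι → R) : R :=
  (A ⬝ᵥ u) * (B ⬝ᵥ v) - (A ⬝ᵥ v) * (B ⬝ᵥ u)

/-- Conormal data of the line of `ℙ⁴` through `a` and `b` in a cubic threefold: the gradient of the
cubic at `x a + y b` is `x² A + x y E + y² C`; it annihilates the line and never vanishes on it. -/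
structure IsConormalNet {K : Type*} [Field K] (a b A E C : Fin 5 → K) : Prop where
  linearIndependent : LinearIndependent K ![a, b]
  basePointFree : BasePointFree K A E C
  dotProduct_eq_zero {v : Fin 5 → K} (hv : v ∈ Submodule.span K {a, b}) :
    A ⬝ᵥ v = 0 ∧ E ⬝ᵥ v = 0 ∧ C ⬝ᵥ v = 0

variable {K : Type*} [Field K] {a b A E C P R : Fin 5 → K}

theorem IsConormalNet.exists_frame (h : IsConormalNet a b A E C) :
    ∃ (δ : K) (π : (Fin 5 → K) →ₗ[K] Fin 3 → K) (A' E' C' : Fin 3 → K),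
      Function.Surjective π ∧
      (∀ u v p, (Matrix.of ![u, v, p, a, b]).det = δ * (π p ⬝ᵥ π u ⨯₃ π v)) ∧
      BasePointFree K A' E' C' ∧
      (∀ v, A ⬝ᵥ v = A' ⬝ᵥ π v) ∧ (∀ v, E ⬝ᵥ v = E' ⬝ᵥ π v) ∧ ∀ v, C ⬝ᵥ v = C' ⬝ᵥ π v := by
  obtain ⟨δ, π, hπ, hdet⟩ := _root_.exists_frame h.linearIndependent
  have hker {p : Fin 5 → K} (hp : π p = 0) : p ∈ Submodule.span K {a, b} :=
    mem_span_pair_of_forall_det_eq_zero h.linearIndependent fun u v => by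
      rw [hdet, hp, zero_dotProduct, mul_zero]
  obtain ⟨A', hA⟩ := exists_dotProduct_eq_dotProduct_comp hπ (B := A) fun _ hv =>
    (h.dotProduct_eq_zero (hker hv)).1
  obtain ⟨E', hE⟩ := exists_dotProduct_eq_dotProduct_comp hπ (B := E) fun _ hv =>
    (h.dotProduct_eq_zero (hker hv)).2.1
  obtain ⟨C', hC⟩ := exists_dotProduct_eq_dotProduct_comp hπ (B := C) fun _ hv =>
    (h.dotProduct_eq_zero (hker hv)).2.2
  refine ⟨δ, π, A', E', C', hπ, hdet, fun x y hxy => h.basePointFree x y ?_, hA, hE, hC⟩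
  refine _root_.dotProduct_eq_zero _ fun v => ?_
  simpa only [add_dotProduct, smul_dotProduct, hA, hE, hC, zero_dotProduct] using
    congrArg (· ⬝ᵥ π v) hxy

theorem IsConormalNet.eq_zero_of_wedge [IsAlgClosed K] (h : IsConormalNet a b A E C) {p q : K}
    (hP : ∀ u v, p * wedge A E u v + q * wedge A C u v = 0)
    (hR : ∀ u v, p * wedge A C u v + q * wedge E C u v = 0) : p = 0 ∧ q = 0 := by
  obtain ⟨δ, π, A', E', C', hπ, -, hbpf, hA, hE, hC⟩ := h.exists_frame
  refine hbpf.eq_zero_of_cross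
    (eq_zero_of_forall_dot_cross <| hπ.forall₂.2 fun u v => ?_)
    (eq_zero_of_forall_dot_cross <| hπ.forall₂.2 fun u v => ?_)
  · simpa only [wedge, hA, hE, hC, add_dotProduct, smul_dotProduct, cross_dot_cross, smul_eq_mul]
      using hP u v
  · simpa only [wedge, hA, hE, hC, add_dotProduct, smul_dotProduct, cross_dot_cross, smul_eq_mul]
      using hR u v

-- This is the isomorphism of the tangent bundle of the Fano surface with the tautological bundle.
theorem IsConormalNet.exists_det_eq_wedge [IsAlgClosed K] (h : IsConormalNet a b A E C)
    (h₀ : A ⬝ᵥ P = 0) (h₁ : E ⬝ᵥ P + A ⬝ᵥ R = 0) (h₂ : C ⬝ᵥ P + E ⬝ᵥ R = 0) (h₃ : C ⬝ᵥ R = 0) :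
    ∃ p q : K, ∀ u v,
      (Matrix.of ![u, v, P, a, b]).det = p * wedge A E u v + q * wedge A C u v ∧
      (Matrix.of ![u, v, R, a, b]).det = p * wedge A C u v + q * wedge E C u v := by
  obtain ⟨δ, π, A', E', C', -, hdet, hbpf, hA, hE, hC⟩ := h.exists_frame
  simp only [hA, hE, hC] at h₀ h₁ h₂ h₃
  obtain ⟨p, q, hP, hR⟩ := hbpf.exists_cross h₀ h₁ h₂ h₃
  refine ⟨δ * p, δ * q, fun u v => ⟨?_, ?_⟩⟩
  · simp only [hdet, hP, wedge, hA, hE, hC, add_dotProduct, smul_dotProduct, cross_dot_cross,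
      smul_eq_mul]
    ring
  · simp only [hdet, hR, wedge, hA, hE, hC, add_dotProduct, smul_dotProduct, cross_dot_cross,
      smul_eq_mul]
    ring

end ConormalNet

section Restriction

variable {K σ : Type*} [CommSemiring K]

/-- Restriction of a polynomial to the affine line `z ↦ x + z • y`. -/
noncomputable def restrictLine (x y : σ → K) : MvPolynomial σ K →ₐ[K] Polynomial K :=
  aeval fun i => .C (x i) + .C (y i) * .X

theorem eval_restrictLine (x y : σ → K) (φ : MvPolynomial σ K) (z : K) :
    (restrictLine x y φ).eval z = eval (x + z • y) φ := by
  induction φ using MvPolynomial.induction_on with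
  | C c => simp [restrictLine]
  | add φ ψ hφ hψ => simp only [map_add, Polynomial.eval_add, hφ, hψ]
  | mul_X φ i hφ =>
    rw [map_mul, Polynomial.eval_mul, hφ]
    simp [restrictLine, mul_comm z]

theorem natDegree_restrictLine_le {φ : MvPolynomial σ K} {d : ℕ} (hφ : φ.IsHomogeneous d)
    (x y : σ → K) : (restrictLine x y φ).natDegree ≤ d := by
  rw [← mul_one d]
  exact aeval_natDegree_le φ hφ.totalDegree_le _ fun i => by compute_degree

theorem coeff_prod_sum_of_natDegree_le {ι : Type*} (s : Finset ι) (f : ι → Polynomial K)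
    (n : ι → ℕ) (h : ∀ i ∈ s, (f i).natDegree ≤ n i) :
    (∏ i ∈ s, f i).coeff (∑ i ∈ s, n i) = ∏ i ∈ s, (f i).coeff (n i) := by
  classical
  induction s using Finset.induction_on with
  | empty => simp
  | insert i s his ih =>
    rw [Finset.forall_mem_insert] at h
    rw [Finset.prod_insert his, Finset.sum_insert his, Finset.prod_insert his,
      Polynomial.coeff_mul_add_eq_of_natDegree_le h.1
        ((Polynomial.natDegree_prod_le _ _).trans (Finset.sum_le_sum h.2)), ih h.2]

theorem coeff_restrictLine {φ : MvPolynomial σ K} {d : ℕ} (hφ : φ.IsHomogeneous d)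
    (x y : σ → K) : (restrictLine x y φ).coeff d = eval y φ := by
  rw [restrictLine, aeval_def, eval₂_eq, Polynomial.finsetSum_coeff, eval_eq]
  refine Finset.sum_congr rfl fun s hs => ?_
  have hlin (i : σ) : (.C (x i) + .C (y i) * .X : Polynomial K).natDegree ≤ 1 := by compute_degree
  rw [Polynomial.algebraMap_eq, Polynomial.coeff_C_mul, hφ.degree_eq_sum_deg_support hs,
    coeff_prod_sum_of_natDegree_le _ _ _ fun i _ =>
      (Polynomial.natDegree_pow_le_of_le (s i) (hlin i)).trans_eq (mul_one _)]
  congr 1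
  refine Finset.prod_congr rfl fun i _ => ?_
  simpa using Polynomial.coeff_pow_of_natDegree_le (hlin i) (m := s i)

end Restriction

section Vanishing

theorem exists_forall_add_smul_ne_zero {K σ : Type*} [Field K] [Nontrivial σ] {x : σ → K}
    (hx : x ≠ 0) : ∃ y ≠ 0, ∀ z : K, x + z • y ≠ 0 := by
  classical
  obtain ⟨i, hi⟩ := Function.ne_iff.1 hx
  obtain ⟨j, hji⟩ := exists_ne i
  refine ⟨Pi.single j 1, by simp, fun z hz => hi ?_⟩
  simpa [hji.symm] using congrFun hz i

theorem isHomogeneous_minor {R σ ι : Type*} [CommRing R] {P Q : ι → MvPolynomial σ R}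
    {w : ι → ℕ} {r s : ℕ} (hP : ∀ i, (P i).IsHomogeneous (w i + r))
    (hQ : ∀ i, (Q i).IsHomogeneous (w i + s)) (i j : ι) :
    (P i * Q j - P j * Q i).IsHomogeneous (w i + w j + (r + s)) := by
  have hij : w i + w j + (r + s) = w i + r + (w j + s) := by ring
  have hji : w i + w j + (r + s) = w j + r + (w i + s) := by ring
  exact (hij ▸ (hP i).mul (hQ j)).sub (hji ▸ (hP j).mul (hQ i))

variable {K : Type*} [Field K] [IsAlgClosed K] {ι : Type*}

theorem exists_polynomial_of_mul_eq {m n : ι → Polynomial K} {f : K → K}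
    (hf : ∀ i z, (m i).eval z * f z = (n i).eval z) (hm : ∀ z, ∃ i, (m i).eval z ≠ 0) :
    ∃ p : Polynomial K, ∀ z, f z = p.eval z := by
  have htop : Ideal.span (Set.range m) = ⊤ := by
    obtain ⟨g, hg⟩ := IsPrincipalIdealRing.principal (Ideal.span (Set.range m))
    rw [Ideal.submodule_span_eq] at hg
    rw [hg, Ideal.span_singleton_eq_top]
    by_contra hu
    obtain ⟨z, hz⟩ : ∃ z, g.eval z = 0 := by
      by_cases h0 : g = 0
      · exact ⟨0, by rw [h0, Polynomial.eval_zero]⟩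
      · exact IsAlgClosed.exists_root g fun hd => hu (Polynomial.isUnit_iff_degree_eq_zero.2 hd)
    obtain ⟨i, hi⟩ := hm z
    obtain ⟨q, hq⟩ := Ideal.mem_span_singleton.1 (hg ▸ Ideal.subset_span ⟨i, rfl⟩ :
      m i ∈ Ideal.span {g})
    exact hi (by rw [hq, Polynomial.eval_mul, hz, zero_mul])
  obtain ⟨c, hc⟩ := (Finsupp.mem_ideal_span_range_iff_exists_finsupp).1
    (htop ▸ Submodule.mem_top : (1 : Polynomial K) ∈ Ideal.span (Set.range m))
  refine ⟨c.sum fun i p => p * n i, fun z => ?_⟩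
  calc f z = (c.sum fun i p => p * m i).eval z * f z := by rw [hc, Polynomial.eval_one, one_mul]
    _ = (c.sum fun i p => p * n i).eval z := by
      simp only [Finsupp.sum, Polynomial.eval_finsetSum, Polynomial.eval_mul, Finset.sum_mul,
        mul_assoc, hf]

variable {σ : Type*} [Nontrivial σ]

-- The restriction of `f` to an affine line is a polynomial of degree `-r`.
theorem eq_zero_of_mul_eq_of_isHomogeneous {m n : ι → MvPolynomial σ K} {d : ι → ℕ} {r : ℕ}
    (hr : 0 < r) (hm : ∀ i, (m i).IsHomogeneous (d i + r)) (hn : ∀ i, (n i).IsHomogeneous (d i))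
    {f : (σ → K) → K} (hf : ∀ x ≠ 0, ∀ i, eval x (m i) * f x = eval x (n i))
    (hm0 : ∀ x ≠ 0, ∃ i, eval x (m i) ≠ 0) {x : σ → K} (hx : x ≠ 0) : f x = 0 := by
  obtain ⟨y, hy, hline⟩ := exists_forall_add_smul_ne_zero hx
  obtain ⟨p, hp⟩ := exists_polynomial_of_mul_eq (f := fun z => f (x + z • y))
    (m := fun i => restrictLine x y (m i)) (n := fun i => restrictLine x y (n i))
    (fun i z => by rw [eval_restrictLine, eval_restrictLine, hf _ (hline z)])
    (fun z => by simpa only [eval_restrictLine] using hm0 _ (hline z))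
  obtain ⟨i, hi⟩ := hm0 y hy
  have hmul : restrictLine x y (m i) * p = restrictLine x y (n i) := Polynomial.funext fun z => by
    rw [Polynomial.eval_mul, ← hp, eval_restrictLine, eval_restrictLine, hf _ (hline z)]
  have hp0 : p = 0 := by
    by_contra hp0
    rw [← coeff_restrictLine (hm i) x y] at hi
    have hdeg := congrArg Polynomial.natDegree hmul
    rw [Polynomial.natDegree_mul (fun h => hi (by rw [h, Polynomial.coeff_zero])) hp0] at hdeg
    have hle := Polynomial.le_natDegree_of_ne_zero hi
    have hge := natDegree_restrictLine_le (hn i) x y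
    lia
  simpa [hp0] using hp 0

theorem eval_eq_zero_of_eq_mul_add_mul_of_isHomogeneous {y M N : ι → MvPolynomial σ K}
    {w : ι → ℕ} {r s : ℕ}
    (hr : 0 < r) (hs : 0 < s) (hy : ∀ i, (y i).IsHomogeneous (w i))
    (hM : ∀ i, (M i).IsHomogeneous (w i + r)) (hN : ∀ i, (N i).IsHomogeneous (w i + s))
    (hex : ∀ x ≠ 0, ∃ p q, ∀ i, eval x (y i) = p * eval x (M i) + q * eval x (N i))
    (huniq : ∀ x ≠ 0, ∀ p q, (∀ i, p * eval x (M i) + q * eval x (N i) = 0) → p = 0 ∧ q = 0)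
    {x : σ → K} (hx : x ≠ 0) (i : ι) : eval x (y i) = 0 := by
  choose! p q hpq using hex
  let minor (ij : ι × ι) : MvPolynomial σ K := M ij.1 * N ij.2 - M ij.2 * N ij.1
  have hminor : ∀ x ≠ 0, ∃ ij, eval x (minor ij) ≠ 0 := by
    intro x hx
    by_contra! h
    have hMN (i j : ι) : eval x (M i) * eval x (N j) - eval x (M j) * eval x (N i) = 0 := by
      simpa only [minor, map_sub, map_mul] using h (i, j)
    have hN0 (i : ι) : eval x (N i) = 0 :=
      (huniq x hx (eval x (N i)) (-eval x (M i)) fun j => by linear_combination -hMN i j).1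
    exact one_ne_zero (huniq x hx 0 1 fun i => by rw [hN0, zero_mul, mul_zero, add_zero]).2
  have hp : p x = 0 := eq_zero_of_mul_eq_of_isHomogeneous (m := minor)
    (n := fun ij => y ij.1 * N ij.2 - y ij.2 * N ij.1) (d := fun ij => w ij.1 + w ij.2 + s) hr
    (fun ij => by
      rw [add_assoc, add_comm s r]; exact isHomogeneous_minor hM hN ij.1 ij.2)
    (fun ij => by simpa only [zero_add] using isHomogeneous_minor (r := 0) hy hN ij.1 ij.2)
    (fun x hx ij => by simp only [minor, map_sub, map_mul, hpq x hx]; ring) hminor hx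
  have hq : q x = 0 := eq_zero_of_mul_eq_of_isHomogeneous (m := minor)
    (n := fun ij => M ij.1 * y ij.2 - M ij.2 * y ij.1) (d := fun ij => w ij.1 + w ij.2 + r) hs
    (fun ij => by rw [add_assoc]; exact isHomogeneous_minor hM hN ij.1 ij.2)
    (fun ij => by simpa only [add_zero] using isHomogeneous_minor (s := 0) hM hy ij.1 ij.2)
    (fun x hx ij => by simp only [minor, map_sub, map_mul, hpq x hx]; ring) hminor hx
  rw [hpq x hx, hp, hq, zero_mul, zero_mul, add_zero]

end Vanishing

section Gradient

theorem derivation_aeval {K S M ι : Type*} [CommSemiring K] [CommSemiring S] [Algebra K S]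
    [AddCommMonoid M] [Module K M] [Module S M] [IsScalarTower K S M] [Fintype ι]
    (D : Derivation K S M) (f : ι → S) (φ : MvPolynomial ι K) :
    D (aeval f φ) = ∑ i, aeval f (pderiv i φ) • D (f i) := by
  classical
  induction φ using MvPolynomial.induction_on with
  | C c => simp
  | add φ ψ hφ hψ => simp only [map_add, hφ, hψ, add_smul, Finset.sum_add_distrib]
  | mul_X φ j hφ =>
    simp [pderiv_X, Pi.single_apply, hφ, add_smul, mul_smul, Finset.sum_add_distrib,
      Finset.smul_sum, apply_ite]

section

variable {K S T ι : Type*} [CommRing K] [CommRing S] [Algebra K S] [CommRing T] [Algebra K T]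

/-- The gradient of `F` at `a`. -/
noncomputable def grad (F : MvPolynomial ι K) (a : ι → S) : ι → S := fun i => aeval a (pderiv i F)

theorem comp_grad (F : MvPolynomial ι K) (e : S →ₐ[K] T) (a : ι → S) :
    e ∘ grad F a = grad F (e ∘ a) := by
  funext i
  exact comp_aeval_apply a e _

variable [Fintype ι] (F : MvPolynomial ι K)

/-- The derivative of the gradient of `F` at `a` in the direction `b`. -/
noncomputable def gradDeriv (a b : ι → S) : ι → S := fun i => grad (pderiv i F) a ⬝ᵥ b

theorem comp_gradDeriv (e : S →ₐ[K] T) (a b : ι → S) :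
    e ∘ gradDeriv F a b = gradDeriv F (e ∘ a) (e ∘ b) := by
  funext i
  rw [gradDeriv, ← comp_grad]
  exact RingHom.map_dotProduct (e : S →+* T) _ _

theorem map_derivation_aeval (e : S →ₐ[K] T) (D : Derivation K S S) (a : ι → S) :
    e (D (aeval a F)) = grad F (e ∘ a) ⬝ᵥ (e ∘ D ∘ a) := by
  rw [derivation_aeval, ← comp_grad]
  exact RingHom.map_dotProduct (e : S →+* T) (grad F a) (D ∘ a)

end

variable {K ι : Type*} [CommRing K] [Fintype ι]

theorem eval_derivative_restrictLine (F : MvPolynomial ι K) (a b : ι → K) (z : K) :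
    (Polynomial.derivative (restrictLine a b F)).eval z = grad F (a + z • b) ⬝ᵥ b := by
  have h := map_derivation_aeval F (Polynomial.aeval z) Polynomial.derivative'
    fun i => (.C (a i) + .C (b i) * .X : Polynomial K)
  convert h using 3 <;> simp [restrictLine, Function.comp_def, Pi.add_def, mul_comm z]

variable {F : MvPolynomial ι K}

theorem eval_add_smul_of_isHomogeneous_two (hF : F.IsHomogeneous 2) (a b : ι → K) (z : K) :
    eval (a + z • b) F = eval a F + z * (grad F a ⬝ᵥ b) + z ^ 2 * eval b F := by
  have h₀ : (restrictLine a b F).coeff 0 = eval a F := by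
    rw [Polynomial.coeff_zero_eq_eval_zero, eval_restrictLine, zero_smul, add_zero]
  have h₁ : (restrictLine a b F).coeff 1 = grad F a ⬝ᵥ b := by
    simpa [← Polynomial.coeff_zero_eq_eval_zero, Polynomial.coeff_derivative] using
      eval_derivative_restrictLine F a b 0
  rw [← eval_restrictLine, Polynomial.eval_eq_sum_range'
    (Nat.lt_succ_of_le (natDegree_restrictLine_le hF a b)), Finset.sum_range_succ,
    Finset.sum_range_succ, Finset.sum_range_one, h₀, h₁, coeff_restrictLine hF]
  ring

theorem grad_add_smul_of_isHomogeneous_three (hF : F.IsHomogeneous 3) (a b : ι → K) (z : K) :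
    grad F (a + z • b) = grad F a + z • gradDeriv F a b + z ^ 2 • grad F b := by
  funext i
  exact eval_add_smul_of_isHomogeneous_two hF.pderiv a b z

end Gradient

section SmoothLine

/-- The line of projective space through `a` and `b` is contained in the hypersurface `F = 0`, which
is smooth along it. -/
structure IsSmoothLine {K ι : Type*} [Field K] (F : MvPolynomial ι K) (a b : ι → K) : Prop where
  linearIndependent : LinearIndependent K ![a, b]
  eval_eq_zero {v : ι → K} (hv : v ∈ Submodule.span K {a, b}) : eval v F = 0
  exists_pderiv_ne_zero {v : ι → K} (hv : v ∈ Submodule.span K {a, b}) (hv0 : v ≠ 0) :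
    ∃ i, eval v (pderiv i F) ≠ 0

section

variable {K ι : Type*} [Field K] {F : MvPolynomial ι K} {a b : ι → K}

theorem IsSmoothLine.grad_ne_zero (h : IsSmoothLine F a b) {v : ι → K}
    (hv : v ∈ Submodule.span K {a, b}) (hv0 : v ≠ 0) : grad F v ≠ 0 := fun hgrad => by
  obtain ⟨i, hi⟩ := h.exists_pderiv_ne_zero hv hv0
  exact hi (congrFun hgrad i)

variable [Fintype ι]

theorem IsSmoothLine.grad_dotProduct_eq_zero [Infinite K] (h : IsSmoothLine F a b)
    {v w : ι → K} (hv : v ∈ Submodule.span K {a, b}) (hw : w ∈ Submodule.span K {a, b}) :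
    grad F v ⬝ᵥ w = 0 := by
  have hzero : restrictLine v w F = 0 := Polynomial.funext fun z => by
    rw [eval_restrictLine, Polynomial.eval_zero]
    exact h.eval_eq_zero (add_mem hv (Submodule.smul_mem _ z hw))
  simpa [hzero] using (eval_derivative_restrictLine F v w 0).symm

theorem IsSmoothLine.basePointFree (h : IsSmoothLine F a b) (hF : F.IsHomogeneous 3) :
    BasePointFree K (grad F a) (gradDeriv F a b) (grad F b) := by
  have ha : a ∈ Submodule.span K {a, b} := Submodule.subset_span (by simp)
  have hb : b ∈ Submodule.span K {a, b} := Submodule.subset_span (by simp)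
  intro x y hxy
  by_cases hx : x = 0
  · subst hx
    simpa [h.grad_ne_zero hb (h.linearIndependent.ne_zero 1)] using hxy
  · refine absurd ?_ (h.grad_ne_zero (add_mem ha (Submodule.smul_mem _ (x⁻¹ * y) hb)) fun h0 =>
      one_ne_zero (LinearIndependent.pair_iff.1 h.linearIndependent 1 _ (by rwa [one_smul])).1)
    rw [grad_add_smul_of_isHomogeneous_three hF]
    have hscale : x ^ 2 • (grad F a + (x⁻¹ * y) • gradDeriv F a b + (x⁻¹ * y) ^ 2 • grad F b) =
        x ^ 2 • grad F a + (x * y) • gradDeriv F a b + y ^ 2 • grad F b := by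
      match_scalars <;> field_simp
    exact (smul_eq_zero.1 (hscale.trans hxy)).resolve_left (pow_ne_zero 2 hx)

end

theorem IsSmoothLine.isConormalNet {K : Type*} [Field K] [Infinite K]
    {F : MvPolynomial (Fin 5) K} {a b : Fin 5 → K} (h : IsSmoothLine F a b)
    (hF : F.IsHomogeneous 3) :
    IsConormalNet a b (grad F a) (gradDeriv F a b) (grad F b) := by
  refine ⟨h.linearIndependent, h.basePointFree hF, fun {v} hv => ?_⟩
  have ha : a ∈ Submodule.span K {a, b} := Submodule.subset_span (by simp)
  have hb : b ∈ Submodule.span K {a, b} := Submodule.subset_span (by simp)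
  have hgrad := h.grad_dotProduct_eq_zero (add_mem ha hb) hv
  have hA := h.grad_dotProduct_eq_zero ha hv
  have hC := h.grad_dotProduct_eq_zero hb hv
  rw [← one_smul K b, grad_add_smul_of_isHomogeneous_three hF] at hgrad
  exact ⟨hA, by simpa [add_dotProduct, hA, hC] using hgrad, hC⟩

theorem dotProduct_derivation_eq_zero {K S ι : Type*} [Field K] [CharZero K] [CommRing S]
    [Algebra K S] [Fintype ι] {F : MvPolynomial ι K} (hF : F.IsHomogeneous 3)
    {a b : ι → S} (h : ∀ z : K, aeval (a + z • b) F = 0)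
    (D : Derivation K S S) (e : S →ₐ[K] K) :
    let A := grad F (e ∘ a)
    let E := gradDeriv F (e ∘ a) (e ∘ b)
    let C := grad F (e ∘ b)
    let P := e ∘ D ∘ a
    let R := e ∘ D ∘ b
    A ⬝ᵥ P = 0 ∧ E ⬝ᵥ P + A ⬝ᵥ R = 0 ∧ C ⬝ᵥ P + E ⬝ᵥ R = 0 ∧ C ⬝ᵥ R = 0 := by
  intro A E C P R
  have hcubic (z : K) : A ⬝ᵥ P + z * (E ⬝ᵥ P + A ⬝ᵥ R) + z ^ 2 * (C ⬝ᵥ P + E ⬝ᵥ R)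
      + z ^ 3 * (C ⬝ᵥ R) = 0 := by
    have hz := map_derivation_aeval F e D (a + z • b)
    have hline : e ∘ (a + z • b) = e ∘ a + z • e ∘ b := by
      funext i
      simp
    have hvel : e ∘ D ∘ (a + z • b) = P + z • R := by
      funext i
      simp [P, R]
    rw [h, map_zero, map_zero, hline, hvel, grad_add_smul_of_isHomogeneous_three hF] at hz
    simp only [add_dotProduct, dotProduct_add, smul_dotProduct, dotProduct_smul, smul_eq_mul] at hz
    linear_combination -hz
  have hzero := hcubic 0
  have hone := hcubic 1
  have hnegOne := hcubic (-1)
  have htwo := hcubic 2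
  refine ⟨by linear_combination hzero, ?_, ?_, ?_⟩
  · linear_combination (hone - hnegOne) / 2
      - (htwo - 3 * hone - hnegOne + 3 * hzero) / 6
  · linear_combination (hone + hnegOne) / 2 - hzero
  · linear_combination (htwo - 3 * hone - hnegOne + 3 * hzero) / 6

end SmoothLine

section Homogeneous

variable {R σ n : Type*} [CommRing R]

theorem isHomogeneous_dotProduct [Fintype n] {P Q : n → MvPolynomial σ R} {r s : ℕ}
    (hP : ∀ i, (P i).IsHomogeneous r) (hQ : ∀ i, (Q i).IsHomogeneous s) :
    (P ⬝ᵥ Q).IsHomogeneous (r + s) :=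
  .sum _ _ _ fun i _ => (hP i).mul (hQ i)

theorem isHomogeneous_wedge [Fintype n] {A B : n → MvPolynomial σ R} {r s : ℕ}
    (hA : ∀ i, (A i).IsHomogeneous r) (hB : ∀ i, (B i).IsHomogeneous s) (u v : n → R) :
    (wedge A B (C ∘ u) (C ∘ v)).IsHomogeneous (r + s) := by
  have hC (w : n → R) (i : n) : ((C ∘ w) i : MvPolynomial σ R).IsHomogeneous 0 :=
    isHomogeneous_C σ (w i)
  have hdot (w : n → R) := isHomogeneous_dotProduct hA (hC w)
  have hdot' (w : n → R) := isHomogeneous_dotProduct hB (hC w)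
  exact ((hdot u).mul (hdot' v)).sub ((hdot v).mul (hdot' u))

theorem isHomogeneous_det [Fintype n] [DecidableEq n] {M : Matrix n n (MvPolynomial σ R)}
    {d : n → ℕ} (hM : ∀ i j, (M i j).IsHomogeneous (d i)) :
    M.det.IsHomogeneous (∑ i, d i) := by
  rw [Matrix.det_apply']
  refine .sum _ _ _ fun τ _ => ?_
  have hprod := IsHomogeneous.prod Finset.univ (fun i => M (τ i) i) _ fun i _ => hM (τ i) i
  rw [Equiv.sum_comp τ d] at hprod
  exact zero_add (∑ i, d i) ▸ (isHomogeneous_C σ (Equiv.Perm.sign τ : R)).mul hprod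

theorem isHomogeneous_grad {ι : Type*} {F : MvPolynomial ι R} {m d : ℕ} (hF : F.IsHomogeneous m)
    {a : ι → MvPolynomial σ R} (ha : ∀ i, (a i).IsHomogeneous d) (i : ι) :
    (grad F a i).IsHomogeneous ((m - 1) * d) :=
  mul_comm d (m - 1) ▸ hF.pderiv.aeval a ha

theorem isHomogeneous_gradDeriv {ι : Type*} [Fintype ι] {F : MvPolynomial ι R} {m d e : ℕ}
    (hF : F.IsHomogeneous m) {a b : ι → MvPolynomial σ R} (ha : ∀ i, (a i).IsHomogeneous d)
    (hb : ∀ i, (b i).IsHomogeneous e) (i : ι) :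
    (gradDeriv F a b i).IsHomogeneous ((m - 1 - 1) * d + e) :=
  isHomogeneous_dotProduct (isHomogeneous_grad hF.pderiv ha) hb

theorem eq_C_of_isHomogeneous_zero {φ : MvPolynomial σ R} (hφ : φ.IsHomogeneous 0) :
    φ = C (coeff 0 φ) :=
  totalDegree_eq_zero_iff_eq_C.1 ((totalDegree_zero_iff_isHomogeneous σ).2 hφ)

end Homogeneous

section Minors

variable {K ι : Type*} [Field K] {a b : ι → K}

theorem exists_minor_ne_zero (hab : LinearIndependent K ![a, b]) :
    ∃ i j, a i * b j - a j * b i ≠ 0 := by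
  by_contra! h
  obtain ⟨i, hi⟩ := Function.ne_iff.1 (hab.ne_zero 0)
  have hrel : b i • a + (-a i) • b = 0 := by
    funext j
    simp only [Pi.add_apply, Pi.smul_apply, smul_eq_mul, Pi.zero_apply]
    linear_combination -h i j
  exact hi (neg_eq_zero.1 (LinearIndependent.pair_iff.1 hab _ _ hrel).2)

theorem exists_minor_derivation_eq_mul {p r : ι → K} (hp : p ∈ Submodule.span K {a, b})
    (hr : r ∈ Submodule.span K {a, b}) :
    ∃ c, ∀ i j, a i * r j + b j * p i - (a j * r i + b i * p j) = (a i * b j - a j * b i) * c := by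
  obtain ⟨x, y, rfl⟩ := Submodule.mem_span_pair.1 hp
  obtain ⟨x', y', rfl⟩ := Submodule.mem_span_pair.1 hr
  refine ⟨x + y', fun i j => ?_⟩
  simp only [Pi.add_apply, Pi.smul_apply, smul_eq_mul]
  ring

end Minors

section LineFamily

/-- A family of lines in the smooth locus of `F = 0` parametrized by a projective space: at each
point `x` the line is spanned by the values of two tuples of forms `a` and `b`. -/
structure IsLineFamily {K σ ι : Type*} [Field K] (F : MvPolynomial ι K) (da db : ℕ)
    (a b : ι → MvPolynomial σ K) : Prop where
  isHomogeneous_left (i : ι) : (a i).IsHomogeneous da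
  isHomogeneous_right (i : ι) : (b i).IsHomogeneous db
  isSmoothLine {x : σ → K} (hx : x ≠ 0) : IsSmoothLine F (aeval x ∘ a) (aeval x ∘ b)

theorem eq_zero_of_forall_ne_zero_aeval_eq_zero {K σ : Type*} [Field K] [Infinite K] [Nonempty σ]
    {φ : MvPolynomial σ K} (h : ∀ x : σ → K, x ≠ 0 → aeval x φ = 0) : φ = 0 := by
  let i := Classical.arbitrary σ
  have hmul : X i * φ = 0 := MvPolynomial.funext fun x => by
    rcases eq_or_ne x 0 with rfl | hx
    · simp
    · rw [map_mul, ← aeval_eq_eval x, h x hx, mul_zero, map_zero]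
  exact (mul_eq_zero.1 hmul).resolve_left (X_ne_zero i)

theorem IsLineFamily.aeval_add_smul_eq_zero {K σ ι : Type*} [Field K] [Infinite K] [Nonempty σ]
    {F : MvPolynomial ι K} {da db : ℕ} {a b : ι → MvPolynomial σ K} (h : IsLineFamily F da db a b)
    (z : K) : aeval (a + z • b) F = 0 :=
  eq_zero_of_forall_ne_zero_aeval_eq_zero fun x hx => by
    rw [comp_aeval_apply, aeval_eq_eval]
    refine (h.isSmoothLine hx).eval_eq_zero (Submodule.mem_span_pair.2 ⟨1, z, ?_⟩)
    funext i
    simp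

theorem aeval_det_rows {K σ : Type*} [CommRing K] (x : σ → K) (u v : Fin 5 → K)
    (p a b : Fin 5 → MvPolynomial σ K) :
    aeval x (Matrix.of ![C ∘ u, C ∘ v, p, a, b]).det =
      (Matrix.of ![u, v, aeval x ∘ p, aeval x ∘ a, aeval x ∘ b]).det := by
  rw [AlgHom.map_det]
  congr 1
  ext i j
  fin_cases i <;> simp

theorem aeval_wedge {K σ ι : Type*} [CommRing K] [Fintype ι] (x : σ → K)
    (A B : ι → MvPolynomial σ K) (u v : ι → K) :
    aeval x (wedge A B (C ∘ u) (C ∘ v)) = wedge (aeval x ∘ A) (aeval x ∘ B) u v := by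
  have hdot (A : ι → MvPolynomial σ K) (u : ι → K) :
      aeval x (A ⬝ᵥ C ∘ u) = (aeval x ∘ A) ⬝ᵥ u := by
    simp [dotProduct]
  simp only [wedge, map_sub, map_mul, hdot]

variable {K σ : Type*} [Field K] {F : MvPolynomial (Fin 5) K} {da db : ℕ}
  {a b : Fin 5 → MvPolynomial σ K}

theorem isHomogeneous_det_pderiv {p : Fin 5 → MvPolynomial σ K} {d : ℕ}
    (hp : ∀ i, (p i).IsHomogeneous d) (ha : ∀ i, (a i).IsHomogeneous da)
    (hb : ∀ i, (b i).IsHomogeneous db) (k : σ) (u v : Fin 5 → K) :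
    (Matrix.of ![C ∘ u, C ∘ v, pderiv k ∘ p, a, b]).det.IsHomogeneous (d + da + db - 1) := by
  obtain rfl | hd := d.eq_zero_or_pos
  · have hzero : pderiv k ∘ p = 0 := by
      funext i
      rw [Function.comp_apply, eq_C_of_isHomogeneous_zero (hp i), pderiv_C, Pi.zero_apply]
    rw [hzero, Matrix.det_eq_zero_of_row_eq_zero 2 fun _ => rfl]
    exact isHomogeneous_zero _ _ _
  · have hsum : d + da + db - 1 = ∑ i, ![0, 0, d - 1, da, db] i := by
      simp only [Fin.sum_univ_five, Matrix.cons_val]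
      lia
    rw [hsum]
    refine isHomogeneous_det fun i j => ?_
    fin_cases i
    exacts [isHomogeneous_C σ (u j), isHomogeneous_C σ (v j), (hp j).pderiv, ha j, hb j]

namespace IsLineFamily

theorem isHomogeneous_minor (h : IsLineFamily F da db a b) (i j : Fin 5) :
    (a i * b j - a j * b i).IsHomogeneous (da + db) := by
  simpa using _root_.isHomogeneous_minor (w := 0) (by simpa using h.isHomogeneous_left)
    (by simpa using h.isHomogeneous_right) i j

theorem isConormalNet [Infinite K] (h : IsLineFamily F da db a b) (hF : F.IsHomogeneous 3)
    {x : σ → K} (hx : x ≠ 0) :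
    IsConormalNet (aeval x ∘ a) (aeval x ∘ b) (aeval x ∘ grad F a) (aeval x ∘ gradDeriv F a b)
      (aeval x ∘ grad F b) := by
  simpa only [comp_grad, comp_gradDeriv] using (h.isSmoothLine hx).isConormalNet hF

variable [CharZero K] [IsAlgClosed K]

theorem exists_det_pderiv_eq_wedge [Nonempty σ] (h : IsLineFamily F da db a b)
    (hF : F.IsHomogeneous 3) (k : σ) {x : σ → K} (hx : x ≠ 0) :
    ∃ p q, ∀ u v,
      aeval x (Matrix.of ![C ∘ u, C ∘ v, pderiv k ∘ a, a, b]).det =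
        p * aeval x (wedge (grad F a) (gradDeriv F a b) (C ∘ u) (C ∘ v)) +
          q * aeval x (wedge (grad F a) (grad F b) (C ∘ u) (C ∘ v)) ∧
      aeval x (Matrix.of ![C ∘ u, C ∘ v, pderiv k ∘ b, a, b]).det =
        p * aeval x (wedge (grad F a) (grad F b) (C ∘ u) (C ∘ v)) +
          q * aeval x (wedge (gradDeriv F a b) (grad F b) (C ∘ u) (C ∘ v)) := by
  obtain ⟨h₀, h₁, h₂, h₃⟩ := dotProduct_derivation_eq_zero hF h.aeval_add_smul_eq_zero
    (pderiv k) (aeval x)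
  simp only [← comp_grad, ← comp_gradDeriv] at h₀ h₁ h₂ h₃
  simpa only [aeval_det_rows, aeval_wedge] using
    (h.isConormalNet hF hx).exists_det_eq_wedge h₀ h₁ h₂ h₃

variable [Nontrivial σ]

-- The tangent bundle of the Fano surface is its tautological bundle, so that the differential of
-- the family is given by sections `p` and `q` of the negative bundles `𝒪(-da-1)` and `𝒪(-db-1)`.
theorem aeval_det_pderiv_eq_zero (h : IsLineFamily F da db a b) (hF : F.IsHomogeneous 3)
    (hd : 0 < da + db) (k : σ) {x : σ → K} (hx : x ≠ 0) (u v : Fin 5 → K) (j : Fin 2) :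
    aeval x (Matrix.of ![C ∘ u, C ∘ v, pderiv k ∘ ![a, b] j, a, b]).det = 0 := by
  have ha := h.isHomogeneous_left
  have hb := h.isHomogeneous_right
  have hA := isHomogeneous_grad hF ha
  have hE := isHomogeneous_gradDeriv hF ha hb
  have hB := isHomogeneous_grad hF hb
  have hAE : (3 - 1) * da + ((3 - 1 - 1) * da + db) = da + da + db - 1 + (da + 1) := by lia
  have hAB₀ : (3 - 1) * da + (3 - 1) * db = da + da + db - 1 + (db + 1) := by lia
  have hAB₁ : (3 - 1) * da + (3 - 1) * db = db + da + db - 1 + (da + 1) := by lia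
  have hEB : (3 - 1 - 1) * da + db + (3 - 1) * db = db + da + db - 1 + (db + 1) := by lia
  refine eval_eq_zero_of_eq_mul_add_mul_of_isHomogeneous
    (ι := Fin 2 × (Fin 5 → K) × (Fin 5 → K))
    (y := fun (j, u, v) => (Matrix.of ![C ∘ u, C ∘ v, pderiv k ∘ ![a, b] j, a, b]).det)
    (M := fun (j, u, v) => wedge (grad F a) (![gradDeriv F a b, grad F b] j) (C ∘ u) (C ∘ v))
    (N := fun (j, u, v) => wedge (![grad F a, gradDeriv F a b] j) (grad F b) (C ∘ u) (C ∘ v))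
    (w := fun (j, _, _) => ![da + da + db - 1, db + da + db - 1] j)
    da.succ_pos db.succ_pos ?_ ?_ ?_ ?_ ?_ hx (j, u, v)
  · rintro ⟨j, u, v⟩
    fin_cases j
    exacts [isHomogeneous_det_pderiv ha ha hb k u v, isHomogeneous_det_pderiv hb ha hb k u v]
  · rintro ⟨j, u, v⟩
    fin_cases j
    exacts [hAE ▸ isHomogeneous_wedge hA hE u v, hAB₁ ▸ isHomogeneous_wedge hA hB u v]
  · rintro ⟨j, u, v⟩
    fin_cases j
    exacts [hAB₀ ▸ isHomogeneous_wedge hA hB u v, hEB ▸ isHomogeneous_wedge hE hB u v]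
  · intro x hx
    obtain ⟨p, q, hpq⟩ := h.exists_det_pderiv_eq_wedge hF k hx
    refine ⟨p, q, ?_⟩
    rintro ⟨j, u, v⟩
    fin_cases j
    exacts [(hpq u v).1, (hpq u v).2]
  · intro x hx p q hpq
    simp only [← aeval_eq_eval x, aeval_wedge, Prod.forall, Fin.forall_fin_two] at hpq
    exact (h.isConormalNet hF hx).eq_zero_of_wedge hpq.1 hpq.2

theorem pderiv_mem_span (h : IsLineFamily F da db a b) (hF : F.IsHomogeneous 3)
    (hd : 0 < da + db) (k : σ) {x : σ → K} (hx : x ≠ 0) (j : Fin 2) :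
    aeval x ∘ pderiv k ∘ ![a, b] j ∈ Submodule.span K {aeval x ∘ a, aeval x ∘ b} :=
  mem_span_pair_of_forall_det_eq_zero (h.isSmoothLine hx).linearIndependent fun u v => by
    rw [← aeval_det_rows, h.aeval_det_pderiv_eq_zero hF hd k hx]

theorem pderiv_minor_eq_zero (h : IsLineFamily F da db a b) (hF : F.IsHomogeneous 3)
    (hd : 0 < da + db) (k : σ) {x : σ → K} (hx : x ≠ 0) (i j : Fin 5) :
    aeval x (pderiv k (a i * b j - a j * b i)) = 0 := by
  let minor (ij : Fin 5 × Fin 5) := a ij.1 * b ij.2 - a ij.2 * b ij.1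
  have hlog (x : σ → K) (hx : x ≠ 0) :
      ∃ c, ∀ ij, aeval x (minor ij) * c = aeval x (pderiv k (minor ij)) := by
    obtain ⟨c, hc⟩ := exists_minor_derivation_eq_mul (h.pderiv_mem_span hF hd k hx 0)
      (h.pderiv_mem_span hF hd k hx 1)
    refine ⟨c, fun ij => ?_⟩
    simpa [minor, Derivation.leibniz] using (hc ij.1 ij.2).symm
  choose! c hc using hlog
  have hminor (ij) : (minor ij).IsHomogeneous (da + db) := h.isHomogeneous_minor ij.1 ij.2
  have hc0 : c x = 0 := eq_zero_of_mul_eq_of_isHomogeneous (m := minor) (d := fun _ => da + db - 1)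
    one_pos (fun ij => (Nat.sub_add_cancel hd).symm ▸ hminor ij) (fun ij => (hminor ij).pderiv)
    hc (fun x hx => by
      obtain ⟨i, j, hij⟩ := exists_minor_ne_zero (h.isSmoothLine hx).linearIndependent
      exact ⟨(i, j), by simpa [minor, ← aeval_eq_eval] using hij⟩) hx
  rw [← hc x hx (i, j), hc0, mul_zero]

theorem degree_eq_zero [Finite σ] (h : IsLineFamily F da db a b) (hF : F.IsHomogeneous 3) :
    da + db = 0 := by
  by_contra hd
  have := Fintype.ofFinite σ
  obtain ⟨x, hx⟩ := exists_ne (0 : σ → K)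
  obtain ⟨i, j, hij⟩ := exists_minor_ne_zero (h.isSmoothLine hx).linearIndependent
  have heuler := congrArg (aeval x) (h.isHomogeneous_minor i j).sum_X_mul_pderiv
  simp only [map_sum, map_mul, h.pderiv_minor_eq_zero hF (Nat.pos_of_ne_zero hd) _ hx, mul_zero,
    Finset.sum_const_zero, map_nsmul] at heuler
  have hzero := (smul_eq_zero.1 heuler.symm).resolve_left hd
  exact hij (by simpa only [map_sub, map_mul, Function.comp_apply] using hzero)

end IsLineFamily

theorem no_rational_curves_in_fano_surface_general {K σ : Type*} [Field K] [IsAlgClosed K]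
    [CharZero K] [Finite σ] [Nontrivial σ] {F : MvPolynomial (Fin 5) K} (hF : F.IsHomogeneous 3)
    {da db : ℕ} {a b : Fin 5 → MvPolynomial σ K} (h : IsLineFamily F da db a b) :
    ∃ W : Submodule K (Fin 5 → K), ∀ x : σ → K, x ≠ 0 →
      Submodule.span K {aeval x ∘ a, aeval x ∘ b} = W := by
  obtain ⟨rfl, rfl⟩ := Nat.add_eq_zero_iff.1 (h.degree_eq_zero hF)
  have hconst {c : Fin 5 → MvPolynomial σ K} (hc : ∀ i, (c i).IsHomogeneous 0) (x : σ → K) :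
      aeval x ∘ c = coeff 0 ∘ c := by
    funext i
    rw [Function.comp_apply, eq_C_of_isHomogeneous_zero (hc i)]
    simp
  refine ⟨Submodule.span K {coeff 0 ∘ a, coeff 0 ∘ b}, fun x _ => ?_⟩
  rw [hconst h.isHomogeneous_left, hconst h.isHomogeneous_right]

end LineFamily

end

/-- The Fano surface of a smooth cubic threefold contains no rational curves: every
algebraic family of lines of `X = V(F)` parametrized by `ℙ¹` is constant.  The family is
given by two vector-valued tuples of binary forms `a, b`, whose values at a point
`[s:t] ∈ ℙ¹` span a 2-dimensional subspace (a line of `ℙ⁴`) contained in `X`; the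
conclusion is that this subspace does not depend on `[s:t]`. -/
theorem no_rational_curves_in_fano_surface
    (F : MvPolynomial (Fin 5) ℂ) (hF3 : F.IsHomogeneous 3)
    (hsmooth : ∀ x : Fin 5 → ℂ, x ≠ 0 → eval x F = 0 →
      ∃ i, eval x (pderiv i F) ≠ 0)
    (da db : ℕ)
    (a b : Fin 5 → MvPolynomial (Fin 2) ℂ)
    (ha : ∀ i, (a i).IsHomogeneous da) (hb : ∀ i, (b i).IsHomogeneous db)
    (hfam : ∀ s t : ℂ, ¬ (s = 0 ∧ t = 0) →
      LinearIndependent ℂ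
        ![(fun i => eval ![s, t] (a i) : Fin 5 → ℂ), fun i => eval ![s, t] (b i)] ∧
      ∀ v ∈ Submodule.span ℂ
          {(fun i => eval ![s, t] (a i) : Fin 5 → ℂ), fun i => eval ![s, t] (b i)},
        eval v F = 0) :
    ∃ W : Submodule ℂ (Fin 5 → ℂ), ∀ s t : ℂ, ¬ (s = 0 ∧ t = 0) →
      Submodule.span ℂ
        {(fun i => eval ![s, t] (a i) : Fin 5 → ℂ), fun i => eval ![s, t] (b i)} = W := by
  have hfamily : IsLineFamily F da db a b := ⟨ha, hb, fun {x} hx => by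
    have hx' : ¬(x 0 = 0 ∧ x 1 = 0) := fun h0 => hx (funext (Fin.forall_fin_two.2 h0))
    have hline := hfam (x 0) (x 1) hx'
    rw [← FinVec.etaExpand_eq x]
    exact ⟨hline.1, hline.2 _, fun hv hv0 => hsmooth _ hv0 (hline.2 _ hv)⟩⟩
  obtain ⟨W, hW⟩ := no_rational_curves_in_fano_surface_general hF3 hfamily
  exact ⟨W, fun s t hst => hW ![s, t] fun h0 => hst ⟨congrFun h0 0, congrFun h0 1⟩⟩
end
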